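/- arXiv:1704.01043 — 9 statements merged into one kernel-verified Lean document; each statement's English description precedes it below -/
import Mathlib

section
/- Assume condition SYM holds. Then for every ψ ∈ Ψ the matrix Φ_ψ is stochastic (all entries are nonnegative and every row sums to 1), so in particular Φ_ψ𝟙 = 𝟙 where 𝟙 is the all-ones vector; moreover the averaged matrix Φ is symmetric and doubly stochastic. If in addition condition BAL holds, then ⟨Φx, x⟩ ≤ 0 for every x ∈ ℝ^Ω with ⟨x, 𝟙⟩ = 0. -/
open MeasureTheory Matrix Finset

/-- The space of weight functions on `k`-tuples of spins from `Ω`. -/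
abbrev WF (Ω : Type*) (k : ℕ) := (Fin k → Ω) → ℝ

/-- `ξ = q^{-k} Σ_σ E[ψ(σ)]`. -/
noncomputable def xiP {Ω : Type*} [Fintype Ω] {k : ℕ} (P : Measure (WF Ω k)) : ℝ :=
  (∑ σ : Fin k → Ω, ∫ ψ, ψ σ ∂P) / (Fintype.card Ω : ℝ) ^ k

/-- The matrix `Φ_ψ(ω,ω') = q^{1-k} ξ^{-1} Σ_τ 1{τ_1=ω, τ_2=ω'} ψ(τ)`. -/
noncomputable def PhiMat {Ω : Type*} [Fintype Ω] [DecidableEq Ω] {k : ℕ} [NeZero k]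
    (ξ : ℝ) (ψ : WF Ω k) : Matrix Ω Ω ℝ :=
  fun ω ω' => ((Fintype.card Ω : ℝ) ^ (k - 1) * ξ)⁻¹ *
    ∑ τ : Fin k → Ω, if τ 0 = ω ∧ τ 1 = ω' then ψ τ else 0

/-- The averaged matrix `Φ = E[Φ_ψ]`. -/
noncomputable def PhiAvg {Ω : Type*} [Fintype Ω] [DecidableEq Ω] {k : ℕ} [NeZero k]
    (ξ : ℝ) (P : Measure (WF Ω k)) : Matrix Ω Ω ℝ :=
  fun ω ω' => ∫ ψ, PhiMat ξ ψ ω ω' ∂P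

/-- Condition SYM, pointwise part: members of `Ψ` have all marginal sums equal to `q^{k-1} ξ`. -/
def SYMpt {Ω : Type*} [Fintype Ω] [DecidableEq Ω] {k : ℕ} (Ψ : Set (WF Ω k)) (ξ : ℝ) : Prop :=
  ∀ ψ ∈ Ψ, ∀ i : Fin k, ∀ ω : Ω,
    (∑ τ : Fin k → Ω, if τ i = ω then ψ τ else 0) = (Fintype.card Ω : ℝ) ^ (k - 1) * ξ

/-- Condition SYM, distributional part: `P` is invariant under coordinate permutations. -/
def SYMperm {Ω : Type*} [Fintype Ω] {k : ℕ} (P : Measure (WF Ω k)) : Prop :=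
  ∀ θ : Equiv.Perm (Fin k),
    P.map (fun ψ : WF Ω k => fun σ : Fin k → Ω => ψ (σ ∘ θ)) = P

/-- The function `φ(μ) = Σ_τ E[ψ(τ)] Π_i μ(τ_i)`. -/
noncomputable def phiFun {Ω : Type*} [Fintype Ω] {k : ℕ} (P : Measure (WF Ω k)) :
    (Ω → ℝ) → ℝ :=
  fun μ => ∑ τ : Fin k → Ω, (∫ ψ, ψ τ ∂P) * ∏ i, μ (τ i)

/-- Condition BAL: `φ` is concave on the simplex and attains its maximum at the
uniform distribution. -/
def BAL {Ω : Type*} [Fintype Ω] {k : ℕ} (P : Measure (WF Ω k)) : Prop :=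
  ConcaveOn ℝ (stdSimplex ℝ Ω) (phiFun P) ∧
    ∀ μ ∈ stdSimplex ℝ Ω, phiFun P μ ≤ phiFun P (fun _ => (Fintype.card Ω : ℝ)⁻¹)

section WeightFunction

variable {Ω : Type*} [Fintype Ω] {k : ℕ}

lemma PhiMat_nonneg [DecidableEq Ω] [NeZero k] {ξ : ℝ} (hξ : 0 ≤ ξ) {ψ : WF Ω k} (hψ : ∀ τ, 0 ≤ ψ τ)
    (ω ω' : Ω) : 0 ≤ PhiMat ξ ψ ω ω' := by
  refine mul_nonneg (by positivity) (Finset.sum_nonneg fun τ _ => ?_)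
  split_ifs
  exacts [hψ τ, le_rfl]

lemma PhiMat_row_sum [DecidableEq Ω] [Nonempty Ω] [NeZero k] {ξ : ℝ} (hξ : 0 < ξ) {ψ : WF Ω k}
    (hψ : SYMpt {ψ} ξ) (ω : Ω) : ∑ ω', PhiMat ξ ψ ω ω' = 1 := by
  have hq : (0 : ℝ) < Fintype.card Ω := by exact_mod_cast Fintype.card_pos
  have hsum := hψ ψ rfl 0 ω
  simp only [PhiMat, ← Finset.mul_sum]
  rw [Finset.sum_comm]
  simp only [ite_and, Finset.sum_ite_irrel, Finset.sum_ite_eq, Finset.mem_univ, if_true,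
    Finset.sum_const_zero]
  rw [hsum]
  exact inv_mul_cancel₀ (by positivity)

lemma PhiMat_isSymm [DecidableEq Ω] [NeZero k] (ξ : ℝ) {ψ : WF Ω k}
    (hψ : ∀ (θ : Equiv.Perm (Fin k)) τ, ψ (τ ∘ θ) = ψ τ) : (PhiMat ξ ψ).IsSymm := by
  ext ω ω'
  simp only [Matrix.transpose_apply, PhiMat]
  congr 1
  refine Fintype.sum_equiv ((Equiv.swap (0 : Fin k) 1).arrowCongr (Equiv.refl Ω)) _ _ fun τ => ?_
  have hτ : (Equiv.swap (0 : Fin k) 1).arrowCongr (Equiv.refl Ω) τ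
      = τ ∘ Equiv.swap (0 : Fin k) 1 := by
    ext i
    simp [Equiv.arrowCongr]
  rw [hτ, hψ]
  simp [and_comm]

lemma PhiMat_mulVec_dotProduct [DecidableEq Ω] [NeZero k] (ξ : ℝ) (ψ : WF Ω k) (x : Ω → ℝ) :
    (PhiMat ξ ψ).mulVec x ⬝ᵥ x =
      ((Fintype.card Ω : ℝ) ^ (k - 1) * ξ)⁻¹ * ∑ τ, ψ τ * (x (τ 0) * x (τ 1)) := by
  simp only [Matrix.mulVec, dotProduct, PhiMat, mul_assoc, Finset.sum_mul, ← Finset.mul_sum]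
  congr 1
  have h (ω : Ω) : (∑ ω', ∑ τ : Fin k → Ω,
      (if τ 0 = ω ∧ τ 1 = ω' then ψ τ else 0) * (x ω' * x ω)) =
      ∑ τ : Fin k → Ω, if τ 0 = ω then ψ τ * (x (τ 1) * x ω) else 0 := by
    rw [Finset.sum_comm]
    refine Finset.sum_congr rfl fun τ _ => ?_
    by_cases h0 : τ 0 = ω <;> simp [h0, ite_mul]
  simp only [h]
  rw [Finset.sum_comm]
  refine Finset.sum_congr rfl fun τ _ => ?_
  simp [mul_comm]

lemma sum_mul_prod_eq_of_card_eq {ψ : WF Ω k}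
    (hψ : ∀ (θ : Equiv.Perm (Fin k)) τ, ψ (τ ∘ θ) = ψ τ) (x : Ω → ℝ)
    {S T : Finset (Fin k)} (hST : S.card = T.card) :
    ∑ τ, ψ τ * ∏ i ∈ S, x (τ i) = ∑ τ, ψ τ * ∏ i ∈ T, x (τ i) := by
  let e := Finset.equivOfCardEq hST
  let θ : Equiv.Perm (Fin k) := Equiv.extendSubtype e
  have hθ : S.map θ.toEmbedding = T := by
    refine Finset.eq_of_subset_of_card_le (fun j hj => ?_) (by simp [hST])
    obtain ⟨i, hi, rfl⟩ := Finset.mem_map.1 hj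
    exact e.extendSubtype_mem i hi
  symm
  refine Fintype.sum_equiv (θ.symm.arrowCongr (Equiv.refl Ω)) _ _ fun τ => ?_
  have hτ : θ.symm.arrowCongr (Equiv.refl Ω) τ = τ ∘ θ := by
    ext i
    simp [Equiv.arrowCongr]
  rw [hτ, hψ, ← hθ, Finset.prod_map]
  rfl

lemma sum_mul_apply_eq_zero [DecidableEq Ω] {ξ : ℝ} {ψ : WF Ω k} (hψ : SYMpt {ψ} ξ) {x : Ω → ℝ}
    (hx : ∑ ω, x ω = 0) (i : Fin k) : ∑ τ, ψ τ * x (τ i) = 0 := by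
  calc ∑ τ, ψ τ * x (τ i) = ∑ τ : Fin k → Ω, ∑ ω, (if τ i = ω then ψ τ else 0) * x ω := by simp
    _ = ∑ ω, (Fintype.card Ω : ℝ) ^ (k - 1) * ξ * x ω := by
      rw [Finset.sum_comm]
      refine Finset.sum_congr rfl fun ω _ => ?_
      rw [← Finset.sum_mul, hψ ψ rfl i ω]
    _ = 0 := by rw [← Finset.mul_sum, hx, mul_zero]

lemma sum_mul_prod_add_mul (ψ : WF Ω k) (a t : ℝ) (x : Ω → ℝ) :
    ∑ τ, ψ τ * ∏ i, (a + t * x (τ i)) =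
      ∑ m ∈ Finset.range (k + 1), t ^ m *
        (a ^ (k - m) * ∑ S ∈ Finset.powersetCard m Finset.univ,
          ∑ τ, ψ τ * ∏ i ∈ S, x (τ i)) := by
  have h (τ : Fin k → Ω) : ∏ i, (a + t * x (τ i)) =
      ∑ m ∈ Finset.range (k + 1), ∑ S ∈ Finset.powersetCard m Finset.univ,
        t ^ m * (a ^ (k - m) * ∏ i ∈ S, x (τ i)) := by
    simp only [add_comm a]
    rw [Finset.prod_add, Finset.sum_powerset, Finset.card_univ, Fintype.card_fin]
    refine Finset.sum_congr rfl fun m _ => Finset.sum_congr rfl fun S hS => ?_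
    rw [Finset.prod_mul_distrib, Finset.prod_const, Finset.prod_const,
      Finset.card_sdiff_of_subset (Finset.subset_univ S), (Finset.mem_powersetCard.1 hS).2,
      Finset.card_univ, Fintype.card_fin]
    ring
  simp only [h, Finset.mul_sum]
  rw [Finset.sum_comm]
  refine Finset.sum_congr rfl fun m _ => ?_
  rw [Finset.sum_comm]
  refine Finset.sum_congr rfl fun S _ => Finset.sum_congr rfl fun τ _ => ?_
  ring

/-- Second-order necessary condition for a local maximum at `0` of a polynomial function. -/
lemma coeff_two_nonpos_of_isLocalMax {n : ℕ} (c : ℕ → ℝ) (h1 : c 1 = 0)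
    (hmax : IsLocalMax (fun t : ℝ => ∑ m ∈ Finset.range (n + 3), t ^ m * c m) 0) : c 2 ≤ 0 := by
  let g : ℝ → ℝ := fun t => ∑ m ∈ Finset.range (n + 1), t ^ m * c (m + 2)
  have hg : Continuous g := by fun_prop
  have hg0 : g 0 = c 2 := by simp [g, Finset.sum_range_succ']
  have hf (t : ℝ) : ∑ m ∈ Finset.range (n + 3), t ^ m * c m = c 0 + t ^ 2 * g t := by
    rw [Finset.sum_range_succ', Finset.sum_range_succ']
    simp only [g, Finset.mul_sum, h1, zero_add, mul_zero, pow_zero, one_mul, add_zero, pow_add,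
      pow_one]
    rw [add_comm]
    congr 1
    refine Finset.sum_congr rfl fun m _ => ?_
    ring
  have hmax' : ∀ᶠ t in nhds (0 : ℝ), c 0 + t ^ 2 * g t ≤ c 0 := by
    filter_upwards [hmax] with t ht
    simpa [hf] using ht
  have hev : ∀ᶠ t in nhdsWithin (0 : ℝ) {0}ᶜ, g t ≤ 0 := by
    filter_upwards [hmax'.filter_mono nhdsWithin_le_nhds, self_mem_nhdsWithin] with t ht ht0
    have : 0 < t ^ 2 := by have : t ≠ 0 := ht0; positivity
    nlinarith
  rw [← hg0]
  exact le_of_tendsto (hg.continuousAt.tendsto.mono_left nhdsWithin_le_nhds) hev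

lemma eventually_uniform_add_smul_mem_stdSimplex [Nonempty Ω] {x : Ω → ℝ}
    (hx : ∑ ω, x ω = 0) :
    ∀ᶠ t in nhds (0 : ℝ), (fun ω => (Fintype.card Ω : ℝ)⁻¹ + t * x ω) ∈ stdSimplex ℝ Ω := by
  have hq : (0 : ℝ) < Fintype.card Ω := by exact_mod_cast Fintype.card_pos
  have h (ω : Ω) : ∀ᶠ t in nhds (0 : ℝ), 0 < (Fintype.card Ω : ℝ)⁻¹ + t * x ω := by
    have hc : Continuous fun t : ℝ => (Fintype.card Ω : ℝ)⁻¹ + t * x ω := by fun_prop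
    exact hc.continuousAt.eventually (lt_mem_nhds (by simpa using hq))
  filter_upwards [Filter.eventually_all.2 h] with t ht
  refine ⟨fun ω => (ht ω).le, ?_⟩
  simp [Finset.sum_add_distrib, ← Finset.mul_sum, hx, hq.ne']

lemma sum_mul_apply_zero_mul_apply_one_nonpos [DecidableEq Ω] [Nonempty Ω] [NeZero k]
    (hk : 2 ≤ k) {ξ : ℝ} {ψ : WF Ω k} (hψ : SYMpt {ψ} ξ) (hperm : ∀ (θ : Equiv.Perm (Fin k)) τ, ψ (τ ∘ θ) = ψ τ)
    (hmax : ∀ μ ∈ stdSimplex ℝ Ω, ∑ τ, ψ τ * ∏ i, μ (τ i) ≤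
      ∑ τ, ψ τ * ∏ _i : Fin k, (Fintype.card Ω : ℝ)⁻¹)
    {x : Ω → ℝ} (hx : ∑ ω, x ω = 0) : ∑ τ, ψ τ * (x (τ 0) * x (τ 1)) ≤ 0 := by
  have hq : (0 : ℝ) < Fintype.card Ω := by exact_mod_cast Fintype.card_pos
  obtain ⟨n, rfl⟩ := Nat.exists_eq_add_of_le' hk
  let c : ℕ → ℝ := fun m => (Fintype.card Ω : ℝ)⁻¹ ^ (n + 2 - m) *
    ∑ S ∈ Finset.powersetCard m Finset.univ, ∑ τ, ψ τ * ∏ i ∈ S, x (τ i)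
  have h1 : c 1 = 0 := by
    refine mul_eq_zero_of_right _ (Finset.sum_eq_zero fun S hS => ?_)
    obtain ⟨i, rfl⟩ := Finset.card_eq_one.1 (Finset.mem_powersetCard.1 hS).2
    simpa using sum_mul_apply_eq_zero hψ hx i
  have h2 : c 2 = (Fintype.card Ω : ℝ)⁻¹ ^ n *
      ((n + 2).choose 2 * ∑ τ, ψ τ * (x (τ 0) * x (τ 1))) := by
    have h (S) (hS : S ∈ Finset.powersetCard 2 (Finset.univ : Finset (Fin (n + 2)))) :
        ∑ τ, ψ τ * ∏ i ∈ S, x (τ i) = ∑ τ, ψ τ * (x (τ 0) * x (τ 1)) := by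
      have h01 : (0 : Fin (n + 2)) ≠ 1 := by simp
      rw [sum_mul_prod_eq_of_card_eq hperm x (T := {0, 1})
        (by rw [(Finset.mem_powersetCard.1 hS).2, Finset.card_pair h01])]
      simp only [Finset.prod_pair h01]
    simp only [c]
    rw [Finset.sum_congr rfl h]
    simp
  have hc2 : c 2 ≤ 0 := by
    refine coeff_two_nonpos_of_isLocalMax (n := n) c h1 ?_
    filter_upwards [eventually_uniform_add_smul_mem_stdSimplex hx] with t ht
    have hle := hmax _ ht
    have h0 := sum_mul_prod_add_mul ψ (Fintype.card Ω : ℝ)⁻¹ 0 x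
    simp only [zero_mul, add_zero] at h0
    rwa [sum_mul_prod_add_mul, h0] at hle
  have hpos : (0 : ℝ) < (n + 2).choose 2 := by
    exact_mod_cast Nat.choose_pos (Nat.le_add_left 2 n)
  rw [h2, ← mul_assoc] at hc2
  exact nonpos_of_mul_nonpos_right hc2 (by positivity)

lemma pos_of_SYMpt [DecidableEq Ω] [Nonempty Ω] [NeZero k] {ξ : ℝ} {ψ : WF Ω k} (hψ : SYMpt {ψ} ξ)
    (hpos : ∀ τ, 0 < ψ τ) : 0 < ξ := by
  obtain ⟨ω⟩ := ‹Nonempty Ω›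
  have h : 0 < (Fintype.card Ω : ℝ) ^ (k - 1) * ξ := by
    rw [← hψ ψ rfl 0 ω]
    refine Finset.sum_pos' (fun τ _ => ?_) ⟨fun _ => ω, Finset.mem_univ _, by simp [hpos]⟩
    split_ifs
    exacts [(hpos τ).le, le_rfl]
  exact pos_of_mul_pos_right h (by positivity)

end WeightFunction

section Mean

variable {Ω : Type*} [Fintype Ω] {k : ℕ} {P : Measure (WF Ω k)}

lemma integral_comp_perm (hP : SYMperm P) (θ : Equiv.Perm (Fin k)) (τ : Fin k → Ω) :
    ∫ ψ, ψ (τ ∘ θ) ∂P = ∫ ψ, ψ τ ∂P := by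
  have hm : Measurable (fun ψ : WF Ω k => fun σ : Fin k → Ω => ψ (σ ∘ θ)) := by fun_prop
  conv_rhs => rw [← hP θ]
  rw [integral_map hm.aemeasurable (measurable_pi_apply τ).aestronglyMeasurable]

variable [DecidableEq Ω]

lemma PhiAvg_eq_PhiMat_integral [NeZero k] (hint : ∀ τ, Integrable (fun ψ : WF Ω k => ψ τ) P)
    (ξ : ℝ) : PhiAvg ξ P = PhiMat ξ fun τ => ∫ ψ, ψ τ ∂P := by
  ext ω ω'
  simp only [PhiAvg, PhiMat]
  rw [integral_const_mul, integral_finsetSum]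
  · congr 1
    refine Finset.sum_congr rfl fun τ _ => ?_
    split_ifs <;> simp
  · intro τ _
    split_ifs
    exacts [hint τ, integrable_zero _ _ _]

lemma SYMpt_integral [IsProbabilityMeasure P] {Ψ : Set (WF Ω k)} {ξ : ℝ}
    (hint : ∀ τ, Integrable (fun ψ : WF Ω k => ψ τ) P) (hPΨ : ∀ᵐ ψ ∂P, ψ ∈ Ψ)
    (hΨ : SYMpt Ψ ξ) : SYMpt {fun τ => ∫ ψ, ψ τ ∂P} ξ := by
  rintro _ rfl i ω
  calc (∑ τ : Fin k → Ω, if τ i = ω then ∫ ψ, ψ τ ∂P else 0)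
      = ∫ ψ : WF Ω k, ∑ τ : Fin k → Ω, (if τ i = ω then ψ τ else 0) ∂P := by
        rw [integral_finsetSum]
        · refine Finset.sum_congr rfl fun τ _ => ?_
          split_ifs <;> simp
        · intro τ _
          split_ifs
          exacts [hint τ, integrable_zero _ _ _]
    _ = ∫ _, (Fintype.card Ω : ℝ) ^ (k - 1) * ξ ∂P :=
        integral_congr_ae (hPΨ.mono fun ψ hψ => hΨ ψ hψ i ω)
    _ = _ := by simp

end Mean

/-- Lemma "Lemma_Phi": under SYM every `Φ_ψ`, `ψ ∈ Ψ`, is a stochastic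
matrix, so `Φ_ψ 𝟙 = 𝟙`; the averaged matrix `Φ` is symmetric and doubly stochastic;
and if moreover BAL holds then `⟨Φ x, x⟩ ≤ 0` whenever `x ⊥ 𝟙`. -/
theorem stmt0 {Ω : Type*} [Fintype Ω] [DecidableEq Ω] [Nonempty Ω]
    {k : ℕ} [NeZero k] (hk : 2 ≤ k)
    (Ψ : Set (WF Ω k)) (P : Measure (WF Ω k)) [IsProbabilityMeasure P]
    (hΨval : ∀ ψ ∈ Ψ, ∀ τ, ψ τ ∈ Set.Ioo (0 : ℝ) 2)
    (hPΨ : ∀ᵐ ψ ∂P, ψ ∈ Ψ)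
    (hSYM : SYMpt Ψ (xiP P) ∧ SYMperm P) :
    (∀ ψ ∈ Ψ,
      (∀ ω ω', 0 ≤ PhiMat (xiP P) ψ ω ω') ∧
      (∀ ω, ∑ ω', PhiMat (xiP P) ψ ω ω' = 1) ∧
      (PhiMat (xiP P) ψ).mulVec (fun _ => 1) = fun _ => 1) ∧
    (PhiAvg (xiP P) P).IsSymm ∧
    (∀ ω ω', 0 ≤ PhiAvg (xiP P) P ω ω') ∧
    (∀ ω, ∑ ω', PhiAvg (xiP P) P ω ω' = 1) ∧
    (∀ ω', ∑ ω, PhiAvg (xiP P) P ω ω' = 1) ∧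
    (BAL P → ∀ x : Ω → ℝ, (∑ ω, x ω = 0) →
      (PhiAvg (xiP P) P).mulVec x ⬝ᵥ x ≤ 0) := by
  obtain ⟨hpt, hperm⟩ := hSYM
  have hpt' : ∀ ψ ∈ Ψ, SYMpt {ψ} (xiP P) := by
    rintro ψ hψ _ rfl
    exact hpt _ hψ
  have hint (τ) : Integrable (fun ψ : WF Ω k => ψ τ) P := by
    refine Integrable.of_bound (measurable_pi_apply τ).aestronglyMeasurable 2 ?_
    filter_upwards [hPΨ] with ψ hψ
    rw [Real.norm_of_nonneg (hΨval ψ hψ τ).1.le]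
    exact (hΨval ψ hψ τ).2.le
  obtain ⟨ψ₀, hψ₀⟩ := hPΨ.exists
  have hξ : 0 < xiP P := pos_of_SYMpt (hpt' ψ₀ hψ₀) fun τ => (hΨval ψ₀ hψ₀ τ).1
  have hmean := SYMpt_integral hint hPΨ hpt
  have hsymm : (PhiAvg (xiP P) P).IsSymm := by
    rw [PhiAvg_eq_PhiMat_integral hint]
    exact PhiMat_isSymm _ (integral_comp_perm hperm)
  have hrow (ω) : ∑ ω', PhiAvg (xiP P) P ω ω' = 1 := by
    rw [PhiAvg_eq_PhiMat_integral hint]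
    exact PhiMat_row_sum hξ hmean ω
  refine ⟨fun ψ hψ => ⟨PhiMat_nonneg hξ.le fun τ => (hΨval ψ hψ τ).1.le,
    PhiMat_row_sum hξ (hpt' ψ hψ), ?_⟩, hsymm, ?_, hrow, fun ω' => ?_, ?_⟩
  · ext ω
    simpa [Matrix.mulVec, dotProduct] using PhiMat_row_sum hξ (hpt' ψ hψ) ω
  · rw [PhiAvg_eq_PhiMat_integral hint]
    refine PhiMat_nonneg hξ.le fun τ => integral_nonneg_of_ae ?_
    filter_upwards [hPΨ] with ψ hψ using (hΨval ψ hψ τ).1.le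
  · rw [← hrow ω']
    exact Finset.sum_congr rfl fun ω _ => hsymm.apply ω' ω
  · rintro ⟨-, hmax⟩ x hx
    rw [PhiAvg_eq_PhiMat_integral hint, PhiMat_mulVec_dotProduct]
    exact mul_nonpos_of_nonneg_of_nonpos (by positivity)
      (sum_mul_apply_zero_mul_apply_one_nonpos hk hmean (integral_comp_perm hperm) hmax hx)
end

section
/- Assume conditions SYM and BAL hold and that q ≥ 2. Let Eig[Ξ] = {λ ∈ ℝ : Ξx = λx for some x ∈ ℰ \ {0}} (a nonempty finite set, since Ξ is self-adjoint and leaves the nonzero subspace ℰ invariant) and set λ̂ = max Eig[Ξ]. Then λ̂ ≥ −min Eig[Ξ], and there exist an orthonormal basis u_1,…,u_{q−1} of the orthogonal complement of 𝟙 in ℝ^Ω and real numbers λ̄_1,…,λ̄_{q−1} ≥ 0 such that the vector Σ = Σ_{i=1}^{q−1} λ̄_i·u_i⊗u_i ∈ ℝ^Ω⊗ℝ^Ω is a unit vector satisfying ΞΣ = λ̂Σ. -/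
open MeasureTheory Matrix Finset

/-- The operator `Ξ = E[Φ_ψ ⊗ Φ_ψ]` on `ℝ^Ω ⊗ ℝ^Ω ≅ ℝ^{Ω×Ω}`. -/
noncomputable def XiMat {Ω : Type*} [Fintype Ω] [DecidableEq Ω] {k : ℕ} [NeZero k]
    (ξ : ℝ) (P : Measure (WF Ω k)) : Matrix (Ω × Ω) (Ω × Ω) ℝ :=
  fun p r => ∫ ψ, PhiMat ξ ψ p.1 r.1 * PhiMat ξ ψ p.2 r.2 ∂P

/-- The subspace `ℰ = {z : ⟨z, 𝟙⊗y⟩ = ⟨z, y⊗𝟙⟩ = 0 for all y}`. -/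
def Ecal (Ω : Type*) [Fintype Ω] : Set (Ω × Ω → ℝ) :=
  {z | ∀ y : Ω → ℝ, (z ⬝ᵥ fun p => y p.2) = 0 ∧ (z ⬝ᵥ fun p => y p.1) = 0}

/-- The subspace `ℰ' = {z : ⟨z, 𝟙⊗𝟙⟩ = 0}`. -/
def Ecal' (Ω : Type*) [Fintype Ω] : Set (Ω × Ω → ℝ) :=
  {z | (z ⬝ᵥ fun _ => (1 : ℝ)) = 0}

/-- The set of eigenvalues of `Ξ` restricted to `ℰ`. -/
noncomputable def EigXiE {Ω : Type*} [Fintype Ω] [DecidableEq Ω] {k : ℕ} [NeZero k]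
    (ξ : ℝ) (P : Measure (WF Ω k)) : Set ℝ :=
  {lam : ℝ | ∃ z ∈ Ecal Ω, z ≠ 0 ∧ (XiMat ξ P).mulVec z = lam • z}

section LinearAlgebra

variable {Ω ι : Type*} [Fintype Ω] [Fintype ι]

/-- The tensor `∑ i, c i • a i ⊗ b i`, as a function on `Ω × Ω`. -/
def sumTensor (c : ι → ℝ) (a b : ι → Ω → ℝ) : Ω × Ω → ℝ :=
  fun p => ∑ i, c i * a i p.1 * b i p.2

/-- The quadratic form of the Kronecker square of `F`. -/
def kronQuad (F : Matrix Ω Ω ℝ) (z : Ω × Ω → ℝ) : ℝ :=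
  ∑ p, ∑ r, z p * (F p.1 r.1 * F p.2 r.2) * z r

lemma mem_Ecal_iff [DecidableEq Ω] (z : Ω × Ω → ℝ) :
    z ∈ Ecal Ω ↔ (∀ b, ∑ a, z (a, b) = 0) ∧ ∀ a, ∑ b, z (a, b) = 0 := by
  constructor
  · intro h
    refine ⟨fun b => ?_, fun a => ?_⟩
    · have := (h (Pi.single b 1)).1
      simpa [dotProduct, Fintype.sum_prod_type, Pi.single_apply] using this
    · have := (h (Pi.single a 1)).2
      simpa [dotProduct, Fintype.sum_prod_type_right, Pi.single_apply] using this
  · rintro ⟨h₁, h₂⟩ y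
    constructor
    · simp [dotProduct, Fintype.sum_prod_type_right, ← Finset.sum_mul, h₁]
    · simp [dotProduct, Fintype.sum_prod_type, ← Finset.sum_mul, h₂]

lemma sumTensor_mem_Ecal [DecidableEq Ω] (c : ι → ℝ) (a b : ι → Ω → ℝ)
    (ha : ∀ i, ∑ ω, a i ω = 0) (hb : ∀ i, ∑ ω, b i ω = 0) : sumTensor c a b ∈ Ecal Ω := by
  rw [mem_Ecal_iff]
  constructor
  · intro y
    simp only [sumTensor]
    rw [Finset.sum_comm]
    simp [← Finset.sum_mul, ← Finset.mul_sum, ha]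
  · intro y
    simp only [sumTensor]
    rw [Finset.sum_comm]
    simp [← Finset.mul_sum, hb]

lemma sumTensor_dotProduct (c : ι → ℝ) (a b a' b' : ι → Ω → ℝ) :
    sumTensor c a b ⬝ᵥ sumTensor c a' b' =
      ∑ i, ∑ j, c i * c j * (a i ⬝ᵥ a' j) * (b i ⬝ᵥ b' j) := by
  simp only [dotProduct, sumTensor, Finset.sum_mul_sum]
  rw [Finset.sum_comm]
  refine Finset.sum_congr rfl fun i _ => ?_
  rw [Finset.sum_comm]
  refine Finset.sum_congr rfl fun j _ => ?_
  rw [Fintype.sum_prod_type, mul_assoc, Finset.sum_mul_sum, Finset.mul_sum]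
  refine Finset.sum_congr rfl fun x _ => ?_
  rw [Finset.mul_sum]
  refine Finset.sum_congr rfl fun y _ => ?_
  ring

lemma kronQuad_sumTensor (F : Matrix Ω Ω ℝ) (c : ι → ℝ) (a b : ι → Ω → ℝ) :
    kronQuad F (sumTensor c a b) =
      ∑ i, ∑ j, c i * c j * (a i ⬝ᵥ F *ᵥ a j) * (b i ⬝ᵥ F *ᵥ b j) := by
  have key : kronQuad F (sumTensor c a b) =
      sumTensor c a b ⬝ᵥ sumTensor c (fun j => F *ᵥ a j) (fun j => F *ᵥ b j) := by
    simp only [kronQuad, dotProduct]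
    refine Finset.sum_congr rfl fun p _ => ?_
    simp only [mul_assoc, ← Finset.mul_sum]
    congr 1
    simp only [sumTensor, Finset.mul_sum]
    rw [Finset.sum_comm]
    refine Finset.sum_congr rfl fun j _ => ?_
    simp only [mulVec, dotProduct]
    rw [mul_assoc, Finset.sum_mul_sum, Finset.mul_sum, Fintype.sum_prod_type]
    refine Finset.sum_congr rfl fun x _ => ?_
    rw [Finset.mul_sum]
    refine Finset.sum_congr rfl fun y _ => ?_
    ring
  rw [key, sumTensor_dotProduct]

lemma abs_mul_le_weighted {s t X Y : ℝ} (hs : 0 ≤ s) (ht : 0 ≤ t)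
    (h : s = 0 ∨ t = 0 → X = 0) :
    |X * Y| ≤ (s⁻¹ * t⁻¹ * X * X + s * t * Y * Y) / 2 := by
  by_cases h0 : s = 0 ∨ t = 0
  · rw [h h0]
    rcases h0 with h0 | h0 <;> simp [h0]
  · push Not at h0
    have hr : 0 < s * t := mul_pos (hs.lt_of_ne' h0.1) (ht.lt_of_ne' h0.2)
    have hX : s⁻¹ * t⁻¹ * X * X + s * t * Y * Y =
        (s * t)⁻¹ * (X ^ 2 + (s * t * Y) ^ 2) := by
      field_simp
    rw [hX, le_div_iff₀ two_pos, ← div_eq_inv_mul, le_div_iff₀ hr]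
    have h1 : |X * (s * t * Y) * 2| ≤ X ^ 2 + (s * t * Y) ^ 2 :=
      abs_le.2 ⟨by nlinarith [sq_nonneg (X + s * t * Y)],
        by nlinarith [sq_nonneg (X - s * t * Y)]⟩
    have h2 : |X * (s * t * Y) * 2| = |X * Y| * 2 * (s * t) := by
      rw [show X * (s * t * Y) * 2 = X * Y * (2 * (s * t)) by ring, abs_mul,
        abs_of_pos (by positivity : 0 < 2 * (s * t))]
      ring
    linarith

/-- Off-diagonal tensors are dominated by the two associated diagonal ones. -/
lemma abs_kronQuad_le (F : Matrix Ω Ω ℝ) (s : ι → ℝ) (w u : ι → Ω → ℝ)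
    (hs : ∀ i, 0 ≤ s i) (hw : ∀ i, s i = 0 → w i = 0) :
    |kronQuad F (sumTensor 1 w u)| ≤
      (kronQuad F (sumTensor (fun i => (s i)⁻¹) w w) + kronQuad F (sumTensor s u u)) / 2 := by
  simp only [kronQuad_sumTensor, ← Finset.sum_add_distrib, Finset.sum_div]
  refine (Finset.abs_sum_le_sum_abs _ _).trans (Finset.sum_le_sum fun i _ => ?_)
  refine (Finset.abs_sum_le_sum_abs _ _).trans (Finset.sum_le_sum fun j _ => ?_)
  simp only [Pi.one_apply, one_mul]
  refine abs_mul_le_weighted (hs i) (hs j) ?_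
  rintro (h | h) <;> simp [hw _ h]

/-- A symmetric matrix with vanishing row sums is diagonalised by an orthonormal basis of `𝟙ᗮ`. -/
lemma exists_orthonormal_eigenvectors [DecidableEq Ω] [Nonempty Ω] (S : Matrix Ω Ω ℝ)
    (hS : S.IsSymm) (h1 : ∀ a, ∑ b, S a b = 0) :
    ∃ (u : Fin (Fintype.card Ω - 1) → Ω → ℝ) (μ : Fin (Fintype.card Ω - 1) → ℝ),
      (∀ i j, (u i ⬝ᵥ u j) = if i = j then 1 else 0) ∧
      (∀ i, ∑ ω, u i ω = 0) ∧
      (∀ x : Ω → ℝ, (∑ ω, x ω = 0) → x = ∑ i, (x ⬝ᵥ u i) • u i) ∧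
      ∀ i, S *ᵥ u i = μ i • u i := by
  let e : EuclideanSpace ℝ Ω := WithLp.toLp 2 (fun _ => 1)
  have he : e ≠ 0 := by
    intro h
    have := congrArg (fun v : EuclideanSpace ℝ Ω => v (Classical.arbitrary Ω)) h
    simp [e] at this
  let V : Submodule ℝ (EuclideanSpace ℝ Ω) := (Submodule.span ℝ {e})ᗮ
  have hmem : ∀ x : EuclideanSpace ℝ Ω, x ∈ V ↔ ∑ ω, x ω = 0 := by
    intro x
    simp [V, Submodule.mem_orthogonal_singleton_iff_inner_right, PiLp.inner_apply, e]
  have hdim : Module.finrank ℝ V = Fintype.card Ω - 1 := by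
    have := Submodule.finrank_add_finrank_orthogonal (Submodule.span ℝ {e})
    rw [finrank_span_singleton he, finrank_euclideanSpace] at this
    change Module.finrank ℝ (Submodule.span ℝ {e})ᗮ = _
    omega
  let T : EuclideanSpace ℝ Ω →ₗ[ℝ] EuclideanSpace ℝ Ω := Matrix.toEuclideanLin S
  have hT : T.IsSymmetric := by
    rw [Matrix.isSymmetric_toEuclideanLin_iff]
    exact (Matrix.conjTranspose_eq_transpose_of_trivial S).trans hS
  have happ : ∀ x ω, T x ω = ∑ b, S ω b * x b := by
    intro x ω
    simp [T, Matrix.toLpLin_apply, mulVec, dotProduct]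
  have hinv : ∀ v ∈ V, T v ∈ V := by
    intro v _
    rw [hmem]
    simp only [happ]
    rw [Finset.sum_comm]
    simp only [← Finset.sum_mul]
    refine Finset.sum_eq_zero fun b _ => ?_
    have : ∑ a, S a b = 0 := by
      rw [← h1 b]
      exact Finset.sum_congr rfl fun a _ => hS.apply b a
    rw [this, zero_mul]
  have hR := hT.restrict_invariant hinv
  let B := hR.eigenvectorBasis hdim
  have hinner : ∀ x y : EuclideanSpace ℝ Ω,
      inner ℝ x y = (fun ω => x ω) ⬝ᵥ (fun ω => y ω) := by
    intro x y
    simp [PiLp.inner_apply, dotProduct, mul_comm]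
  refine ⟨fun i ω => (B i : EuclideanSpace ℝ Ω) ω, hR.eigenvalues hdim, ?_, ?_, ?_, ?_⟩
  · intro i j
    rw [← hinner, ← Submodule.coe_inner]
    exact orthonormal_iff_ite.1 B.orthonormal i j
  · intro i
    exact (hmem _).1 (B i).2
  · intro x hx
    let y : V := ⟨WithLp.toLp 2 x, (hmem _).2 (by simpa using hx)⟩
    have hy := congrArg (fun v : V => (v : EuclideanSpace ℝ Ω)) (B.sum_repr' y)
    funext ω
    have hω := congrArg (fun v : EuclideanSpace ℝ Ω => v ω) hy
    simp only [Submodule.coe_sum, Submodule.coe_smul, WithLp.ofLp_sum, WithLp.ofLp_smul,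
      Finset.sum_apply, Pi.smul_apply, Submodule.coe_inner, hinner] at hω ⊢
    rw [show x ω = (y : EuclideanSpace ℝ Ω) ω from rfl, ← hω]
    refine Finset.sum_congr rfl fun i _ => ?_
    rw [dotProduct_comm]
  · intro i
    have h := congrArg (fun v : V => (v : EuclideanSpace ℝ Ω))
      (hR.apply_eigenvectorBasis hdim i)
    funext ω
    have hω : T (B i : EuclideanSpace ℝ Ω) ω =
        hR.eigenvalues hdim i * (B i : EuclideanSpace ℝ Ω) ω :=
      congrArg (fun v : EuclideanSpace ℝ Ω => v ω) h
    rw [happ] at hω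
    exact hω

/-- The unit-norm elements of `ℰ` that are symmetric and positive semidefinite as matrices. -/
def unitPSD (Ω : Type*) [Fintype Ω] : Set (Ω × Ω → ℝ) :=
  {z | z ∈ Ecal Ω ∧ (∀ a b, z (a, b) = z (b, a)) ∧
    (∀ x : Ω → ℝ, 0 ≤ ∑ p : Ω × Ω, z p * (x p.1 * x p.2)) ∧ z ⬝ᵥ z = 1}

lemma isCompact_unitPSD : IsCompact (unitPSD Ω) := by
  apply Metric.isCompact_of_isClosed_isBounded
  · have hset : unitPSD Ω = {z | (∀ y : Ω → ℝ, (z ⬝ᵥ fun p => y p.2) = 0 ∧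
        (z ⬝ᵥ fun p => y p.1) = 0) ∧ (∀ a b, z (a, b) = z (b, a)) ∧
        (∀ x : Ω → ℝ, 0 ≤ ∑ p : Ω × Ω, z p * (x p.1 * x p.2)) ∧ z ⬝ᵥ z = 1} := rfl
    rw [hset]
    simp only [Set.ofPred_and, Set.ofPred_forall, dotProduct]
    refine IsClosed.inter ?_ (IsClosed.inter ?_ (IsClosed.inter ?_ ?_))
    · exact isClosed_iInter fun y => (isClosed_eq (by fun_prop) (by fun_prop)).inter
        (isClosed_eq (by fun_prop) (by fun_prop))
    · exact isClosed_iInter fun a => isClosed_iInter fun b =>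
        isClosed_eq (by fun_prop) (by fun_prop)
    · exact isClosed_iInter fun x => isClosed_le (by fun_prop) (by fun_prop)
    · exact isClosed_eq (by fun_prop) (by fun_prop)
  · rw [isBounded_iff_forall_norm_le]
    refine ⟨1, fun z hz => ?_⟩
    rw [pi_norm_le_iff_of_nonneg zero_le_one]
    intro p
    have h := hz.2.2.2
    rw [Real.norm_eq_abs, ← sq_le_one_iff_abs_le_one, ← h, sq]
    exact Finset.single_le_sum (f := fun p => z p * z p) (fun p _ => mul_self_nonneg _)
      (Finset.mem_univ p)

lemma sumTensor_psd (c : ι → ℝ) (hc : ∀ i, 0 ≤ c i) (a : ι → Ω → ℝ) (x : Ω → ℝ) :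
    0 ≤ ∑ p : Ω × Ω, sumTensor c a a p * (x p.1 * x p.2) := by
  have : ∑ p : Ω × Ω, sumTensor c a a p * (x p.1 * x p.2) =
      ∑ i, c i * ((a i ⬝ᵥ x) * (a i ⬝ᵥ x)) := by
    simp only [sumTensor, Finset.sum_mul]
    rw [Finset.sum_comm]
    refine Finset.sum_congr rfl fun i _ => ?_
    simp only [dotProduct]
    rw [Fintype.sum_prod_type, Finset.sum_mul_sum, Finset.mul_sum]
    refine Finset.sum_congr rfl fun s _ => ?_
    rw [Finset.mul_sum]
    refine Finset.sum_congr rfl fun y _ => ?_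
    ring
  rw [this]
  exact Finset.sum_nonneg fun i _ => mul_nonneg (hc i) (mul_self_nonneg _)

lemma unitPSD_nonempty [DecidableEq Ω] (hq : 2 ≤ Fintype.card Ω) : (unitPSD Ω).Nonempty := by
  obtain ⟨a, b, hab⟩ := Fintype.exists_pair_of_one_lt_card (α := Ω) hq
  let v : Unit → Ω → ℝ := fun _ => Pi.single a 1 - Pi.single b 1
  have hv : ∀ i, ∑ ω, v i ω = 0 := by
    intro i
    simp [v, Finset.sum_sub_distrib]
  have hvv : ∀ i j, v i ⬝ᵥ v j = 2 := by
    intro i j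
    simp [v, hab, hab.symm]
    norm_num
  refine ⟨sumTensor (fun _ => 1 / 2) v v, sumTensor_mem_Ecal _ _ _ hv hv, ?_,
    sumTensor_psd _ (fun _ => by norm_num) _, ?_⟩
  · intro x y
    simp [sumTensor]
    ring
  · rw [sumTensor_dotProduct]
    simp [hvv]

lemma quad_smul (M : Matrix (Ω × Ω) (Ω × Ω) ℝ) (t : ℝ) (z : Ω × Ω → ℝ) :
    (t • z) ⬝ᵥ M *ᵥ (t • z) = t * t * (z ⬝ᵥ M *ᵥ z) := by
  simp [mulVec_smul, mul_assoc]

lemma quad_sumTensor_le [DecidableEq Ω] (M : Matrix (Ω × Ω) (Ω × Ω) ℝ) (m : ℝ)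
    (hm : ∀ z ∈ unitPSD Ω, z ⬝ᵥ M *ᵥ z ≤ m) (c : ι → ℝ) (hc : ∀ i, 0 ≤ c i)
    (a : ι → Ω → ℝ) (ha : ∀ i, ∑ ω, a i ω = 0) :
    sumTensor c a a ⬝ᵥ M *ᵥ sumTensor c a a ≤
      m * (sumTensor c a a ⬝ᵥ sumTensor c a a) := by
  set z := sumTensor c a a with hz
  by_cases h0 : z = 0
  · simp [h0]
  have hpos : 0 < z ⬝ᵥ z := by
    refine lt_of_le_of_ne (Finset.sum_nonneg fun p _ => mul_self_nonneg _) ?_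
    exact fun h => h0 (dotProduct_self_eq_zero.1 h.symm)
  set t := (Real.sqrt (z ⬝ᵥ z))⁻¹ with ht
  have htt : t * t * (z ⬝ᵥ z) = 1 := by
    rw [ht, ← mul_inv, Real.mul_self_sqrt hpos.le, inv_mul_cancel₀ hpos.ne']
  have ht0 : 0 ≤ t := by positivity
  have htz : t • z = sumTensor (fun i => t * c i) a a := by
    funext p
    simp [hz, sumTensor, Finset.mul_sum, mul_assoc]
  have hmem : t • z ∈ unitPSD Ω := by
    refine ⟨?_, ?_, ?_, ?_⟩
    · rw [htz]
      exact sumTensor_mem_Ecal _ _ _ ha ha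
    · intro x y
      simp only [htz, sumTensor]
      exact Finset.sum_congr rfl fun i _ => by ring
    · rw [htz]
      exact sumTensor_psd _ (fun i => mul_nonneg ht0 (hc i)) _
    · rw [← htt]
      simp [mul_assoc]
  have := hm _ hmem
  rw [quad_smul] at this
  calc z ⬝ᵥ M *ᵥ z = (t * t * (z ⬝ᵥ z)) * (z ⬝ᵥ M *ᵥ z) := by rw [htt, one_mul]
    _ = (t * t * (z ⬝ᵥ M *ᵥ z)) * (z ⬝ᵥ z) := by ring
    _ ≤ m * (z ⬝ᵥ z) := by gcongr

/-- A singular value decomposition on `𝟙ᗮ` reduces bounds on `ℰ` to positive semidefinite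
elements. -/
lemma abs_quad_le_of_unitPSD [DecidableEq Ω] [Nonempty Ω] (M : Matrix (Ω × Ω) (Ω × Ω) ℝ) (m : ℝ)
    (hm : ∀ z ∈ unitPSD Ω, z ⬝ᵥ M *ᵥ z ≤ m)
    (hM : ∀ (s : Fin (Fintype.card Ω - 1) → ℝ) (w u : Fin (Fintype.card Ω - 1) → Ω → ℝ),
      (∀ i, 0 ≤ s i) → (∀ i, s i = 0 → w i = 0) →
      |sumTensor 1 w u ⬝ᵥ M *ᵥ sumTensor 1 w u| ≤
        (sumTensor (fun i => (s i)⁻¹) w w ⬝ᵥ M *ᵥ sumTensor (fun i => (s i)⁻¹) w w +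
          sumTensor s u u ⬝ᵥ M *ᵥ sumTensor s u u) / 2)
    (z : Ω × Ω → ℝ) (hz : z ∈ Ecal Ω) :
    |z ⬝ᵥ M *ᵥ z| ≤ m * (z ⬝ᵥ z) := by
  rw [mem_Ecal_iff] at hz
  let Z : Matrix Ω Ω ℝ := fun a b => z (a, b)
  obtain ⟨u, μ, hortho, hsum, hcomplete, heig⟩ := exists_orthonormal_eigenvectors (Zᵀ * Z)
    (by simp [Matrix.IsSymm, Matrix.transpose_mul]) (by
      intro a
      simp only [Matrix.mul_apply]
      rw [Finset.sum_comm]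
      simp [← Finset.mul_sum, Z, hz.2])
  let w : Fin (Fintype.card Ω - 1) → Ω → ℝ := fun i => Z *ᵥ u i
  have hww : ∀ i j, w i ⬝ᵥ w j = if i = j then μ i else 0 := by
    intro i j
    have : w i ⬝ᵥ w j = u i ⬝ᵥ (Zᵀ * Z) *ᵥ u j := by
      simp only [w]
      rw [← Matrix.mulVec_mulVec, Matrix.dotProduct_mulVec (u i), Matrix.vecMul_transpose]
    rw [this, heig, dotProduct_smul, hortho]
    by_cases h : i = j <;> simp [h]
  have hμ : ∀ i, 0 ≤ μ i := by
    intro i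
    have := hww i i
    rw [if_pos rfl] at this
    rw [← this]
    exact Finset.sum_nonneg fun p _ => mul_self_nonneg _
  let s : Fin (Fintype.card Ω - 1) → ℝ := fun i => Real.sqrt (μ i)
  have hs : ∀ i, 0 ≤ s i := fun i => Real.sqrt_nonneg _
  have hss : ∀ i, s i * s i = μ i := fun i => Real.mul_self_sqrt (hμ i)
  have hw0 : ∀ i, s i = 0 → w i = 0 := by
    intro i h
    have := hww i i
    rw [if_pos rfl, ← hss, h, mul_zero] at this
    exact dotProduct_self_eq_zero.1 this
  have hwsum : ∀ i, ∑ ω, w i ω = 0 := by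
    intro i
    simp only [w, mulVec, dotProduct]
    rw [Finset.sum_comm]
    simp [← Finset.sum_mul, Z, hz.1]
  have hzw : z = sumTensor 1 w u := by
    funext ⟨a, b⟩
    have := congrFun (hcomplete (fun b => z (a, b)) (hz.2 a)) b
    rw [this]
    simp [sumTensor, w, mulVec, Z]
  have hnz : z ⬝ᵥ z = ∑ i, μ i := by
    rw [hzw, sumTensor_dotProduct]
    simp [hww, hortho]
  have hnB : sumTensor s u u ⬝ᵥ sumTensor s u u = ∑ i, μ i := by
    rw [sumTensor_dotProduct]
    simp [hortho, hss]
  have hnA : sumTensor (fun i => (s i)⁻¹) w w ⬝ᵥ sumTensor (fun i => (s i)⁻¹) w w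
      = ∑ i, μ i := by
    rw [sumTensor_dotProduct]
    refine Finset.sum_congr rfl fun i _ => ?_
    simp only [hww, mul_ite, mul_zero, Finset.sum_ite_eq, Finset.mem_univ, if_true, ← hss i]
    by_cases h : s i = 0
    · simp [h]
    · field_simp
  have hA := quad_sumTensor_le M m hm (fun i => (s i)⁻¹) (fun i => inv_nonneg.2 (hs i)) w hwsum
  have hB := quad_sumTensor_le M m hm s hs u hsum
  have hZ := hM s w u hs hw0
  rw [hnA] at hA
  rw [hnB] at hB
  rw [hnz, hzw]
  linarith

/-- A maximiser of the Rayleigh quotient on an invariant subspace is an eigenvector. -/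
lemma mulVec_eq_smul_of_isMax [DecidableEq Ω] (M : Matrix (Ω × Ω) (Ω × Ω) ℝ) (hsymm : M.IsSymm)
    (hinv : ∀ z ∈ Ecal Ω, M *ᵥ z ∈ Ecal Ω) (m : ℝ)
    (hm : ∀ z ∈ Ecal Ω, z ⬝ᵥ M *ᵥ z ≤ m * (z ⬝ᵥ z)) (x : Ω × Ω → ℝ) (hx : x ∈ Ecal Ω)
    (hxm : x ⬝ᵥ M *ᵥ x = m * (x ⬝ᵥ x)) : M *ᵥ x = m • x := by
  set y := M *ᵥ x - m • x with hy
  have hlin : ∀ t : ℝ, x + t • y ∈ Ecal Ω := by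
    intro t v
    have h₁ := hx v
    have h₂ := hinv x hx v
    constructor <;>
      simp [hy, add_dotProduct, sub_dotProduct, h₁.1, h₁.2, h₂.1, h₂.2]
  have hsw : x ⬝ᵥ M *ᵥ y = y ⬝ᵥ M *ᵥ x := by
    rw [Matrix.dotProduct_mulVec, ← Matrix.mulVec_transpose, hsymm.eq, dotProduct_comm]
  have hyy : y ⬝ᵥ M *ᵥ x - m * (y ⬝ᵥ x) = y ⬝ᵥ y := by
    nth_rewrite 4 [hy]
    simp [dotProduct_sub]
  have hpoly : ∀ t : ℝ, 2 * t * (y ⬝ᵥ y) + t ^ 2 * (y ⬝ᵥ M *ᵥ y - m * (y ⬝ᵥ y)) ≤ 0 := by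
    intro t
    have h := hm _ (hlin t)
    simp only [mulVec_add, mulVec_smul, add_dotProduct, dotProduct_add, smul_dotProduct,
      dotProduct_smul, smul_eq_mul, hsw, hxm, dotProduct_comm x y] at h
    rw [← hyy] at *
    nlinarith
  have hzero : y ⬝ᵥ y = 0 := by
    have hnn : 0 ≤ y ⬝ᵥ y := Finset.sum_nonneg fun p _ => mul_self_nonneg _
    by_contra hne
    have hpos : 0 < y ⬝ᵥ y := lt_of_le_of_ne hnn (Ne.symm hne)
    set d := y ⬝ᵥ M *ᵥ y - m * (y ⬝ᵥ y) with hd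
    have h := hpoly ((y ⬝ᵥ y) / (|d| + 1))
    have hD : 0 < |d| + 1 := by positivity
    have hdd : -|d| ≤ d := neg_abs_le d
    have hform : 2 * ((y ⬝ᵥ y) / (|d| + 1)) * (y ⬝ᵥ y) + ((y ⬝ᵥ y) / (|d| + 1)) ^ 2 * d =
        ((y ⬝ᵥ y) / (|d| + 1)) ^ 2 * (2 * (|d| + 1) + d) := by
      field_simp
    rw [hform] at h
    have : 0 < ((y ⬝ᵥ y) / (|d| + 1)) ^ 2 * (2 * (|d| + 1) + d) :=
      mul_pos (by positivity) (by linarith [abs_nonneg d])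
    linarith
  exact sub_eq_zero.1 (dotProduct_self_eq_zero.1 hzero)

/-- Elements of `unitPSD` are nonnegative combinations of squares of an orthonormal basis. -/
lemma exists_sumTensor_of_mem_unitPSD [DecidableEq Ω] [Nonempty Ω] (z : Ω × Ω → ℝ)
    (hz : z ∈ unitPSD Ω) :
    ∃ (u : Fin (Fintype.card Ω - 1) → Ω → ℝ) (lbar : Fin (Fintype.card Ω - 1) → ℝ),
      (∀ i j, (u i ⬝ᵥ u j) = if i = j then 1 else 0) ∧
      (∀ i, ∑ ω, u i ω = 0) ∧
      (∀ x : Ω → ℝ, (∑ ω, x ω = 0) → x = ∑ i, (x ⬝ᵥ u i) • u i) ∧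
      (∀ i, 0 ≤ lbar i) ∧ z = sumTensor lbar u u := by
  obtain ⟨hE, hsymm, hpsd, -⟩ := hz
  rw [mem_Ecal_iff] at hE
  obtain ⟨u, μ, hortho, hsum, hcomplete, heig⟩ := exists_orthonormal_eigenvectors
    (fun a b => z (a, b) : Matrix Ω Ω ℝ) (by ext a b; exact hsymm b a) hE.2
  refine ⟨u, μ, hortho, hsum, hcomplete, fun i => ?_, ?_⟩
  · have h := hpsd (u i)
    have hμ : ∑ p : Ω × Ω, z p * (u i p.1 * u i p.2) = μ i := by
      calc ∑ p : Ω × Ω, z p * (u i p.1 * u i p.2)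
          = u i ⬝ᵥ (fun a b => z (a, b) : Matrix Ω Ω ℝ) *ᵥ u i := by
            simp only [dotProduct, mulVec, Fintype.sum_prod_type, Finset.mul_sum]
            refine Finset.sum_congr rfl fun a _ => Finset.sum_congr rfl fun b _ => ?_
            ring
        _ = μ i := by rw [heig, dotProduct_smul, hortho]; simp
    rwa [hμ] at h
  · funext ⟨a, b⟩
    have h := congrFun (hcomplete (fun b => z (a, b)) (hE.2 a)) b
    rw [h]
    simp only [sumTensor, Finset.sum_apply, Pi.smul_apply, smul_eq_mul]
    refine Finset.sum_congr rfl fun i _ => ?_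
    congr 1
    exact congrFun (heig i) a

end LinearAlgebra

section Weights

variable {Ω : Type*} [Fintype Ω] [DecidableEq Ω] {k : ℕ} [NeZero k]

lemma memLp_PhiMat (ξ : ℝ) {Ψ : Set (WF Ω k)} {P : Measure (WF Ω k)} [IsProbabilityMeasure P]
    (hΨval : ∀ ψ ∈ Ψ, ∀ τ, ψ τ ∈ Set.Ioo (0 : ℝ) 2) (hPΨ : ∀ᵐ ψ ∂P, ψ ∈ Ψ) (a b : Ω) :
    MemLp (fun ψ => PhiMat ξ ψ a b) 2 P := by
  have hsum : MemLp (fun ψ : WF Ω k => ∑ τ : Fin k → Ω, if τ 0 = a ∧ τ 1 = b then ψ τ else 0)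
      2 P := by
    refine memLp_finsetSum _ fun τ _ => ?_
    split_ifs
    · refine MemLp.of_bound (measurable_pi_apply τ).aestronglyMeasurable 2 ?_
      filter_upwards [hPΨ] with ψ hψ
      have := hΨval ψ hψ τ
      rw [Real.norm_eq_abs, abs_of_pos this.1]
      exact this.2.le
    · exact MemLp.zero'
  exact hsum.const_mul _

lemma integrable_PhiMat_mul (ξ : ℝ) {Ψ : Set (WF Ω k)} {P : Measure (WF Ω k)}
    [IsProbabilityMeasure P] (hΨval : ∀ ψ ∈ Ψ, ∀ τ, ψ τ ∈ Set.Ioo (0 : ℝ) 2)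
    (hPΨ : ∀ᵐ ψ ∂P, ψ ∈ Ψ) (a b c d : Ω) :
    Integrable (fun ψ => PhiMat ξ ψ a b * PhiMat ξ ψ c d) P :=
  (memLp_PhiMat ξ hΨval hPΨ a b).integrable_mul (memLp_PhiMat ξ hΨval hPΨ c d)

lemma PhiMat_perm_swap (ξ : ℝ) (ψ : WF Ω k) (a b : Ω) :
    PhiMat ξ (fun σ : Fin k → Ω => ψ (σ ∘ Equiv.swap 0 1)) a b = PhiMat ξ ψ b a := by
  simp only [PhiMat]
  congr 1
  refine Fintype.sum_equiv (Equiv.arrowCongr (Equiv.swap 0 1) (Equiv.refl Ω)) _ _ fun τ => ?_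
  simp [Equiv.arrowCongr, Function.comp_def, and_comm]

lemma measurable_PhiMat (ξ : ℝ) (a b : Ω) :
    Measurable (fun ψ : WF Ω k => PhiMat ξ ψ a b) := by
  refine Measurable.const_mul (Finset.measurable_sum _ fun τ _ => ?_) _
  split_ifs
  · exact measurable_pi_apply τ
  · exact measurable_const

lemma XiMat_isSymm (ξ : ℝ) {P : Measure (WF Ω k)} (hP : SYMperm P) : (XiMat ξ P).IsSymm := by
  ext p r
  have h := hP (Equiv.swap 0 1)
  simp only [Matrix.transpose_apply, XiMat]
  conv_lhs => rw [← h]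
  refine (integral_map
    (measurable_pi_lambda _ fun σ => measurable_pi_apply _).aemeasurable
    ((measurable_PhiMat ξ _ _).mul (measurable_PhiMat ξ _ _)).aestronglyMeasurable).trans ?_
  simp only [PhiMat_perm_swap]

lemma sum_PhiMat {ξ : ℝ} {Ψ : Set (WF Ω k)} (hΨ : SYMpt Ψ ξ) {ψ : WF Ω k}
    (hψ : ψ ∈ Ψ) (b : Ω) :
    ∑ a, PhiMat ξ ψ a b =
      ((Fintype.card Ω : ℝ) ^ (k - 1) * ξ)⁻¹ * ((Fintype.card Ω : ℝ) ^ (k - 1) * ξ) := by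
  simp only [PhiMat]
  rw [← Finset.mul_sum, ← hΨ ψ hψ 1 b, Finset.sum_comm]
  congr 1
  refine Finset.sum_congr rfl fun τ _ => ?_
  simp [ite_and]

lemma quad_XiMat (ξ : ℝ) {Ψ : Set (WF Ω k)} {P : Measure (WF Ω k)} [IsProbabilityMeasure P]
    (hΨval : ∀ ψ ∈ Ψ, ∀ τ, ψ τ ∈ Set.Ioo (0 : ℝ) 2) (hPΨ : ∀ᵐ ψ ∂P, ψ ∈ Ψ)
    (z : Ω × Ω → ℝ) :
    Integrable (fun ψ => kronQuad (PhiMat ξ ψ) z) P ∧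
      z ⬝ᵥ XiMat ξ P *ᵥ z = ∫ ψ, kronQuad (PhiMat ξ ψ) z ∂P := by
  have hint : ∀ p r : Ω × Ω, Integrable
      (fun ψ => z p * (PhiMat ξ ψ p.1 r.1 * PhiMat ξ ψ p.2 r.2) * z r) P := fun p r =>
    ((integrable_PhiMat_mul ξ hΨval hPΨ _ _ _ _).const_mul _).mul_const _
  refine ⟨integrable_finsetSum _ fun p _ => integrable_finsetSum _ fun r _ => hint p r, ?_⟩
  simp only [kronQuad]
  rw [integral_finsetSum _ fun p _ => integrable_finsetSum _ fun r _ => hint p r]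
  simp only [dotProduct, mulVec, Finset.mul_sum]
  refine Finset.sum_congr rfl fun p _ => ?_
  rw [integral_finsetSum _ fun r _ => hint p r]
  refine Finset.sum_congr rfl fun r _ => ?_
  rw [integral_mul_const, integral_const_mul, XiMat]
  ring

lemma XiMat_mulVec_mem_Ecal {ξ : ℝ} {Ψ : Set (WF Ω k)} {P : Measure (WF Ω k)}
    [IsProbabilityMeasure P] (hΨval : ∀ ψ ∈ Ψ, ∀ τ, ψ τ ∈ Set.Ioo (0 : ℝ) 2)
    (hPΨ : ∀ᵐ ψ ∂P, ψ ∈ Ψ) (hΨ : SYMpt Ψ ξ) (z : Ω × Ω → ℝ) (hz : z ∈ Ecal Ω) :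
    XiMat ξ P *ᵥ z ∈ Ecal Ω := by
  set C := ((Fintype.card Ω : ℝ) ^ (k - 1) * ξ)⁻¹ * ((Fintype.card Ω : ℝ) ^ (k - 1) * ξ)
  have h₁ : ∀ b (r : Ω × Ω), ∑ a, XiMat ξ P (a, b) r = ∫ ψ, C * PhiMat ξ ψ b r.2 ∂P := by
    intro b r
    simp only [XiMat]
    rw [← integral_finsetSum _ fun a _ => integrable_PhiMat_mul ξ hΨval hPΨ _ _ _ _]
    refine integral_congr_ae ?_
    filter_upwards [hPΨ] with ψ hψ
    rw [← Finset.sum_mul, sum_PhiMat hΨ hψ]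
  have h₂ : ∀ a (r : Ω × Ω), ∑ b, XiMat ξ P (a, b) r = ∫ ψ, PhiMat ξ ψ a r.1 * C ∂P := by
    intro a r
    simp only [XiMat]
    rw [← integral_finsetSum _ fun b _ => integrable_PhiMat_mul ξ hΨval hPΨ _ _ _ _]
    refine integral_congr_ae ?_
    filter_upwards [hPΨ] with ψ hψ
    rw [← Finset.mul_sum, sum_PhiMat hΨ hψ]
  rw [mem_Ecal_iff]
  constructor
  · intro b
    simp only [mulVec, dotProduct]
    rw [Finset.sum_comm]
    simp only [← Finset.sum_mul, h₁]
    have := (hz fun c => ∫ ψ, C * PhiMat ξ ψ b c ∂P).1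
    rwa [dotProduct_comm] at this
  · intro a
    simp only [mulVec, dotProduct]
    rw [Finset.sum_comm]
    simp only [← Finset.sum_mul, h₂]
    have := (hz fun c => ∫ ψ, PhiMat ξ ψ a c * C ∂P).2
    rwa [dotProduct_comm] at this

end Weights

/-- Lemma "Cor:MaxOpt": under SYM and BAL with `q ≥ 2`, the spectrum of
`Ξ|_ℰ` has a greatest element `λ̂`, which satisfies `λ̂ ≥ -min Eig[Ξ]`, and `λ̂` possesses a
unit eigenvector of the form `Σ = Σ_i λ̄_i u_i⊗u_i` with `λ̄_i ≥ 0` and `(u_i)` an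
orthonormal basis of `𝟙^⊥`. -/
theorem stmt2 {Ω : Type*} [Fintype Ω] [DecidableEq Ω] [Nonempty Ω]
    {k : ℕ} [NeZero k] (hk : 2 ≤ k) (hq : 2 ≤ Fintype.card Ω)
    (Ψ : Set (WF Ω k)) (P : Measure (WF Ω k)) [IsProbabilityMeasure P]
    (hΨval : ∀ ψ ∈ Ψ, ∀ τ, ψ τ ∈ Set.Ioo (0 : ℝ) 2)
    (hPΨ : ∀ᵐ ψ ∂P, ψ ∈ Ψ)
    (hSYM : SYMpt Ψ (xiP P) ∧ SYMperm P) (hBAL : BAL P) :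
    ∃ lamhat : ℝ, IsGreatest (EigXiE (xiP P) P) lamhat ∧
      (∀ lam ∈ EigXiE (xiP P) P, -lam ≤ lamhat) ∧
      ∃ (u : Fin (Fintype.card Ω - 1) → Ω → ℝ) (lbar : Fin (Fintype.card Ω - 1) → ℝ),
        (∀ i j, (u i ⬝ᵥ u j) = if i = j then 1 else 0) ∧
        (∀ i, ∑ ω, u i ω = 0) ∧
        (∀ x : Ω → ℝ, (∑ ω, x ω = 0) → x = ∑ i, (x ⬝ᵥ u i) • u i) ∧
        (∀ i, 0 ≤ lbar i) ∧
        ((fun p : Ω × Ω => ∑ i, lbar i * u i p.1 * u i p.2) ⬝ᵥ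
          (fun p : Ω × Ω => ∑ i, lbar i * u i p.1 * u i p.2)) = 1 ∧
        (XiMat (xiP P) P).mulVec (fun p : Ω × Ω => ∑ i, lbar i * u i p.1 * u i p.2) =
          lamhat • (fun p : Ω × Ω => ∑ i, lbar i * u i p.1 * u i p.2) := by
  obtain ⟨hpt, hperm⟩ := hSYM
  set M := XiMat (xiP P) P with hMdef
  have hcont : Continuous fun z : Ω × Ω → ℝ => z ⬝ᵥ M *ᵥ z := by
    simp only [dotProduct, mulVec]
    fun_prop
  obtain ⟨x, hx, hmax⟩ := isCompact_unitPSD.exists_isMaxOn (unitPSD_nonempty hq)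
    hcont.continuousOn
  set m := x ⬝ᵥ M *ᵥ x with hm
  have habs : ∀ z ∈ Ecal Ω, |z ⬝ᵥ M *ᵥ z| ≤ m * (z ⬝ᵥ z) := by
    refine abs_quad_le_of_unitPSD M m (fun z hz => hmax hz) fun s w u hs hw => ?_
    obtain ⟨hi₁, he₁⟩ := quad_XiMat (xiP P) hΨval hPΨ (sumTensor 1 w u)
    obtain ⟨hi₂, he₂⟩ := quad_XiMat (xiP P) hΨval hPΨ (sumTensor (fun i => (s i)⁻¹) w w)
    obtain ⟨hi₃, he₃⟩ := quad_XiMat (xiP P) hΨval hPΨ (sumTensor s u u)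
    rw [hMdef, he₁, he₂, he₃, ← integral_add hi₂ hi₃, ← integral_div]
    exact (abs_integral_le_integral_abs).trans
      (integral_mono hi₁.abs ((hi₂.add hi₃).div_const 2) fun ψ => abs_kronQuad_le _ s w u hs hw)
  have hxeig : M *ᵥ x = m • x :=
    mulVec_eq_smul_of_isMax M (XiMat_isSymm _ hperm)
      (XiMat_mulVec_mem_Ecal hΨval hPΨ hpt) m (fun z hz => (le_abs_self _).trans (habs z hz))
      x hx.1 (by rw [hx.2.2.2, mul_one])
  have heig : ∀ lam ∈ EigXiE (xiP P) P, |lam| ≤ m := by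
    rintro lam ⟨z, hz, hz0, hlam⟩
    have hpos : 0 < z ⬝ᵥ z := lt_of_le_of_ne (Finset.sum_nonneg fun p _ => mul_self_nonneg _)
      fun h => hz0 (dotProduct_self_eq_zero.1 h.symm)
    have h := habs z hz
    rw [hMdef, hlam, dotProduct_smul, smul_eq_mul, abs_mul, abs_of_pos hpos] at h
    exact le_of_mul_le_mul_right h hpos
  have hx0 : x ≠ 0 := by
    rintro rfl
    simpa using hx.2.2.2
  obtain ⟨u, lbar, hortho, hsum, hcomplete, hlbar, hxu⟩ := exists_sumTensor_of_mem_unitPSD x hx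
  refine ⟨m, ⟨⟨x, hx.1, hx0, hxeig⟩, fun lam h => (le_abs_self _).trans (heig lam h)⟩,
    fun lam h => (neg_le_abs _).trans (heig lam h), u, lbar, hortho, hsum, hcomplete, hlbar, ?_⟩
  change sumTensor lbar u u ⬝ᵥ sumTensor lbar u u = 1 ∧
    M *ᵥ sumTensor lbar u u = m • sumTensor lbar u u
  rw [← hxu]
  exact ⟨hx.2.2.2, hxeig⟩
end

section
/- Assume conditions SYM and BAL hold. For n ≥ 1 and σ : {1,…,n} → Ω let ρ_σ ∈ P(Ω) denote the empirical distribution ρ_σ(ω) = |σ^{−1}(ω)|/n. Then for every D > 0 there exists c > 0 such that for all n ≥ 1 and all integers m with 0 ≤ m ≤ Dn/k: c·q^n·ξ^m ≤ Σ_{σ : {1,…,n}→Ω} φ(ρ_σ)^m ≤ q^n·ξ^m. (The middle sum equals the expected partition function E[Z(G(n,m,P))] of the random factor graph with n variable nodes and m constraint nodes whose neighborhoods and weight functions are chosen independently at random.) -/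
open MeasureTheory Matrix Finset

/-- Empirical spin distribution of an assignment `σ : {1,…,n} → Ω`. -/
noncomputable def empDist {Ω : Type*} [Fintype Ω] [DecidableEq Ω] {n : ℕ}
    (σ : Fin n → Ω) : Ω → ℝ :=
  fun ω => ((Finset.univ.filter fun i => σ i = ω).card : ℝ) / n

/-- Composition with an injection pushes the uniform distribution on spin assignments forward to
the uniform distribution. -/
lemma sum_comp_injective_mul_card_pow {Ω α β : Type*} [Fintype Ω] [Fintype α] [Fintype β]
    [DecidableEq α] [DecidableEq β] (J : α → β) (hJ : Function.Injective J) (f : (α → Ω) → ℝ) :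
    (∑ σ : β → Ω, f (σ ∘ J)) * (Fintype.card Ω : ℝ) ^ Fintype.card α =
      (Fintype.card Ω : ℝ) ^ Fintype.card β * ∑ τ, f τ := by
  classical
  let e := Equiv.piEquivPiSubtypeProd (fun b : β => b ∈ Set.range J) (fun _ => Ω)
  let r : (Set.range J → Ω) ≃ (α → Ω) :=
    Equiv.arrowCongr (Equiv.ofInjective J hJ).symm (Equiv.refl Ω)
  have hsum : ∑ σ : β → Ω, f (σ ∘ J) =
      (Fintype.card ({b : β // b ∉ Set.range J} → Ω) : ℝ) * ∑ τ, f τ := by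
    have h1 : ∑ σ : β → Ω, f (σ ∘ J) =
        ∑ p : (Set.range J → Ω) × ({b : β // b ∉ Set.range J} → Ω), f (r p.1) :=
      Fintype.sum_equiv e _ _ fun σ => rfl
    rw [h1, Fintype.sum_prod_type]
    simp only [sum_const, card_univ, nsmul_eq_mul]
    rw [← mul_sum, Equiv.sum_comp r f]
  have hcard : Fintype.card Ω ^ Fintype.card β =
      Fintype.card Ω ^ Fintype.card α * Fintype.card ({b : β // b ∉ Set.range J} → Ω) := by
    have h2 := Fintype.card_congr (e.trans (Equiv.prodCongr r (Equiv.refl _)))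
    rw [Fintype.card_prod, Fintype.card_fun, Fintype.card_fun] at h2
    exact h2
  have hcard' : (Fintype.card Ω : ℝ) ^ Fintype.card β = (Fintype.card Ω : ℝ) ^ Fintype.card α *
      (Fintype.card ({b : β // b ∉ Set.range J} → Ω) : ℝ) := by exact_mod_cast hcard
  rw [hsum, hcard']
  ring

/-- Averaging over independent samples from the empirical distribution of `σ` amounts to averaging
over all maps `Fin k → Fin n`. -/
lemma sum_mul_prod_empDist {Ω : Type*} [Fintype Ω] [DecidableEq Ω] {k n : ℕ}
    (a : (Fin k → Ω) → ℝ) (σ : Fin n → Ω) :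
    ∑ τ, a τ * ∏ i, empDist σ (τ i) = (∑ J : Fin k → Fin n, a (σ ∘ J)) / (n : ℝ) ^ k := by
  have hprod (τ : Fin k → Ω) : ∏ i, empDist σ (τ i) =
      (∑ J : Fin k → Fin n, if σ ∘ J = τ then (1 : ℝ) else 0) / (n : ℝ) ^ k := by
    simp only [empDist, prod_div_distrib, prod_const, card_univ, Fintype.card_fin]
    congr 1
    have h (i : Fin k) : ((univ.filter fun j => σ j = τ i).card : ℝ) =
        ∑ j, if σ j = τ i then (1 : ℝ) else 0 := by simp
    simp only [h]
    rw [Finset.prod_univ_sum, Fintype.piFinset_univ]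
    refine sum_congr rfl fun J _ => ?_
    rw [Finset.prod_ite_zero]
    simp [funext_iff]
  simp only [hprod, mul_div_assoc', ← sum_div, mul_sum]
  rw [sum_comm]
  simp

lemma one_sub_mul_pow_le_card_injective (k n : ℕ) (hn : 1 ≤ n) :
    (1 - (k : ℝ) ^ 2 / n) * (n : ℝ) ^ k ≤
      ((univ.filter fun J : Fin k → Fin n => Function.Injective J).card : ℝ) := by
  have hn' : (0 : ℝ) < n := by exact_mod_cast hn
  rcases lt_or_ge n k with h | h
  · refine le_trans (mul_nonpos_of_nonpos_of_nonneg ?_ (by positivity)) (Nat.cast_nonneg _)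
    have : (n : ℝ) ≤ k := by exact_mod_cast h.le
    have hk1 : (1 : ℝ) ≤ k := by exact_mod_cast hn.trans h.le
    rw [sub_nonpos, one_le_div hn']
    nlinarith
  · have hcard : (univ.filter fun J : Fin k → Fin n => Function.Injective J).card =
        n.descFactorial k := by
      rw [← Fintype.card_subtype,
        Fintype.card_congr (Equiv.subtypeInjectiveEquivEmbedding (Fin k) (Fin n)),
        Fintype.card_embedding_eq, Fintype.card_fin, Fintype.card_fin]
    have hkn : (k : ℝ) ≤ n := by exact_mod_cast h
    have hb : 1 + (k : ℝ) * (-(k / n)) ≤ (1 + -((k : ℝ) / n)) ^ k := by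
      refine one_add_mul_le_pow ?_ k
      have : (k : ℝ) / n ≤ 1 := (div_le_one hn').2 hkn
      linarith
    have hd : ((n - k : ℕ) : ℝ) ^ k ≤ (n.descFactorial k : ℝ) := by
      exact_mod_cast (Nat.pow_le_pow_left (by omega) k).trans (Nat.pow_sub_le_descFactorial n k)
    rw [hcard]
    calc (1 - (k : ℝ) ^ 2 / n) * (n : ℝ) ^ k
        = (1 + (k : ℝ) * (-(k / n))) * (n : ℝ) ^ k := by ring
      _ ≤ (1 + -((k : ℝ) / n)) ^ k * (n : ℝ) ^ k := by gcongr
      _ = ((n - k : ℕ) : ℝ) ^ k := by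
          rw [← mul_pow, Nat.cast_sub h]
          congr 1
          field_simp
          ring
      _ ≤ _ := hd

/-- The mean over all assignments of a nonnegative multilinear form evaluated at the empirical
distribution is close to its value at the uniform distribution. -/
lemma one_sub_mul_le_sum_sum_mul_prod_empDist {Ω : Type*} [Fintype Ω] [DecidableEq Ω] [Nonempty Ω]
    {k n : ℕ} (hn : 1 ≤ n) (a : (Fin k → Ω) → ℝ) (ha : ∀ τ, 0 ≤ a τ) :
    (Fintype.card Ω : ℝ) ^ n * ((∑ τ, a τ) / (Fintype.card Ω : ℝ) ^ k) * (1 - (k : ℝ) ^ 2 / n) ≤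
      ∑ σ : Fin n → Ω, ∑ τ, a τ * ∏ i, empDist σ (τ i) := by
  classical
  have hn' : (0 : ℝ) < n := by exact_mod_cast hn
  have hq : (0 : ℝ) < Fintype.card Ω := by exact_mod_cast Fintype.card_pos
  have hsum : 0 ≤ ∑ τ, a τ := sum_nonneg fun τ _ => ha τ
  simp only [sum_mul_prod_empDist]
  rw [← sum_div, sum_comm, le_div_iff₀ (by positivity)]
  set I := univ.filter fun J : Fin k → Fin n => Function.Injective J
  have hI (J) (hJ : J ∈ I) : ∑ σ : Fin n → Ω, a (σ ∘ J) =
      (Fintype.card Ω : ℝ) ^ n * ((∑ τ, a τ) / (Fintype.card Ω : ℝ) ^ k) := by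
    have h := sum_comp_injective_mul_card_pow J (mem_filter.1 hJ).2 a
    rw [Fintype.card_fin, Fintype.card_fin] at h
    rw [mul_div_assoc', eq_div_iff (by positivity), h]
  calc _ = (Fintype.card Ω : ℝ) ^ n * ((∑ τ, a τ) / (Fintype.card Ω : ℝ) ^ k) *
        ((1 - (k : ℝ) ^ 2 / n) * (n : ℝ) ^ k) := by ring
    _ ≤ (Fintype.card Ω : ℝ) ^ n * ((∑ τ, a τ) / (Fintype.card Ω : ℝ) ^ k) * (I.card : ℝ) := by
        gcongr
        exact one_sub_mul_pow_le_card_injective k n hn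
    _ = ∑ J ∈ I, ∑ σ : Fin n → Ω, a (σ ∘ J) := by
        rw [sum_congr rfl hI, sum_const, nsmul_eq_mul, mul_comm]
    _ ≤ _ := sum_le_sum_of_subset_of_nonneg (subset_univ _)
        fun J _ _ => sum_nonneg fun σ _ => ha _

/-- Jensen's inequality: a lower bound on the power mean of numbers in `[δ, 1]` in terms of their
average distance from `1`. -/
lemma card_mul_exp_le_sum_pow {ι : Type*} [Fintype ι] (x : ι → ℝ) {δ ε : ℝ}
    (hδ : 0 < δ) (hx : ∀ i, δ ≤ x i) (hx1 : ∀ i, x i ≤ 1)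
    (hε : ∑ i, (1 - x i) ≤ Fintype.card ι * ε) (m : ℕ) :
    (Fintype.card ι : ℝ) * Real.exp (-(m * ε / δ)) ≤ ∑ i, x i ^ m := by
  have hpow (i : ι) : Real.exp (-(m * ε / δ)) * (1 + m / δ * (ε - (1 - x i))) ≤ x i ^ m := by
    have hxi : 0 < x i := hδ.trans_le (hx i)
    have hlog : -((1 - x i) / δ) ≤ Real.log (x i) := by
      have h1 := Real.one_sub_inv_le_log_of_pos hxi
      have h2 : (1 - x i) / x i ≤ (1 - x i) / δ :=
        div_le_div_of_nonneg_left (sub_nonneg.2 (hx1 i)) hδ (hx i)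
      have h3 : (1 - x i) / x i = (x i)⁻¹ - 1 := by field_simp
      linarith
    calc Real.exp (-(m * ε / δ)) * (1 + m / δ * (ε - (1 - x i)))
        ≤ Real.exp (-(m * ε / δ)) * Real.exp (m / δ * (ε - (1 - x i))) := by
          gcongr
          linarith [Real.add_one_le_exp (m / δ * (ε - (1 - x i)))]
      _ = Real.exp (m * (-((1 - x i) / δ))) := by
          rw [← Real.exp_add]
          congr 1
          ring
      _ ≤ Real.exp (m * Real.log (x i)) := by gcongr
      _ = x i ^ m := by rw [Real.exp_nat_mul, Real.exp_log hxi]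
  refine le_trans ?_ (sum_le_sum fun i _ => hpow i)
  rw [← mul_sum, sum_add_distrib, ← mul_sum, sum_sub_distrib]
  simp only [sum_const, card_univ, nsmul_eq_mul, mul_one]
  rw [mul_comm]
  gcongr
  have : 0 ≤ (m : ℝ) / δ * ((Fintype.card ι : ℝ) * ε - ∑ i, (1 - x i)) :=
    mul_nonneg (by positivity) (sub_nonneg.2 hε)
  linarith

lemma empDist_mem_stdSimplex {Ω : Type*} [Fintype Ω] [DecidableEq Ω] {n : ℕ} (hn : 1 ≤ n)
    (σ : Fin n → Ω) : empDist σ ∈ stdSimplex ℝ Ω := by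
  have hn' : (n : ℝ) ≠ 0 := by exact_mod_cast (by omega : n ≠ 0)
  refine ⟨fun ω => by unfold empDist; positivity, ?_⟩
  have h := card_eq_sum_card_fiberwise (f := σ) (s := univ) (t := univ) (by simp)
  rw [card_univ, Fintype.card_fin] at h
  simp only [empDist]
  rw [← sum_div, div_eq_one_iff_eq hn']
  exact_mod_cast h.symm

lemma le_sum_mul_prod_of_mem_stdSimplex {Ω : Type*} [Fintype Ω] {k : ℕ}
    (a : (Fin k → Ω) → ℝ) {δ : ℝ} (hδ : ∀ τ, δ ≤ a τ) {μ : Ω → ℝ} (hμ : μ ∈ stdSimplex ℝ Ω) :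
    δ ≤ ∑ τ, a τ * ∏ i, μ (τ i) := by
  classical
  have h : ∑ τ : Fin k → Ω, ∏ i, μ (τ i) = 1 := by
    have := Finset.prod_univ_sum (fun _ : Fin k => (univ : Finset Ω)) (fun _ ω => μ ω)
    rw [Fintype.piFinset_univ] at this
    rw [← this, hμ.2, prod_const_one]
  calc δ = ∑ τ : Fin k → Ω, δ * ∏ i, μ (τ i) := by rw [← mul_sum, h, mul_one]
    _ ≤ _ := by
      gcongr with τ
      · exact prod_nonneg fun i _ => hμ.1 _
      · exact hδ τ

lemma integral_apply_pos {ι : Type*} (P : Measure (ι → ℝ)) [IsProbabilityMeasure P]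
    (i : ι) {b : ℝ} (h : ∀ᵐ ψ ∂P, ψ i ∈ Set.Ioo 0 b) : 0 < ∫ ψ, ψ i ∂P := by
  have hint : Integrable (fun ψ : ι → ℝ => ψ i) P := by
    refine Integrable.of_bound (measurable_pi_apply i).aestronglyMeasurable b ?_
    filter_upwards [h] with ψ hψ
    rw [Real.norm_of_nonneg hψ.1.le]
    exact hψ.2.le
  rw [integral_pos_iff_support_of_nonneg_ae (h.mono fun ψ hψ => hψ.1.le) hint]
  have hsupp : (Function.support fun ψ : ι → ℝ => ψ i) =ᵐ[P] Set.univ :=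
    Filter.eventuallyEq_univ.2 (h.mono fun ψ hψ => hψ.1.ne')
  rw [measure_congr hsupp, measure_univ]
  exact one_pos

lemma phiFun_uniform {Ω : Type*} [Fintype Ω] {k : ℕ} (P : Measure (WF Ω k)) :
    phiFun P (fun _ => (Fintype.card Ω : ℝ)⁻¹) = xiP P := by
  simp [phiFun, xiP, ← sum_mul, div_eq_mul_inv]

/-- Lemma "Cor_F", first moment: under SYM and BAL, for every `D > 0`
there is `c > 0` such that for all `n ≥ 1` and all `m ≤ Dn/k`,
`c·q^n·ξ^m ≤ Σ_σ φ(ρ_σ)^m ≤ q^n·ξ^m`; the middle sum is the expected partition function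
`E[Z(G(n,m,P))]`. -/
theorem stmt4 {Ω : Type*} [Fintype Ω] [DecidableEq Ω] [Nonempty Ω]
    {k : ℕ} [NeZero k] (hk : 2 ≤ k)
    (Ψ : Set (WF Ω k)) (P : Measure (WF Ω k)) [IsProbabilityMeasure P]
    (hΨval : ∀ ψ ∈ Ψ, ∀ τ, ψ τ ∈ Set.Ioo (0 : ℝ) 2)
    (hPΨ : ∀ᵐ ψ ∂P, ψ ∈ Ψ)
    (hSYM : SYMpt Ψ (xiP P) ∧ SYMperm P) (hBAL : BAL P) :
    ∀ D : ℝ, 0 < D → ∃ c : ℝ, 0 < c ∧ ∀ n : ℕ, 1 ≤ n → ∀ m : ℕ,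
      (m : ℝ) ≤ D * n / k →
      c * (Fintype.card Ω : ℝ) ^ n * xiP P ^ m ≤
          (∑ σ : Fin n → Ω, phiFun P (empDist σ) ^ m) ∧
        (∑ σ : Fin n → Ω, phiFun P (empDist σ) ^ m) ≤
          (Fintype.card Ω : ℝ) ^ n * xiP P ^ m := by
  have hapos (τ : Fin k → Ω) : 0 < ∫ ψ, ψ τ ∂P :=
    integral_apply_pos P τ (hPΨ.mono fun ψ hψ => hΨval ψ hψ τ)
  obtain ⟨τ₀, hτ₀⟩ := Finite.exists_min fun τ : Fin k → Ω => ∫ ψ, ψ τ ∂P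
  set δ := ∫ ψ, ψ τ₀ ∂P
  have hδ : 0 < δ := hapos τ₀
  have hq : (0 : ℝ) < Fintype.card Ω := by exact_mod_cast Fintype.card_pos
  have hξ : 0 < xiP P :=
    div_pos (sum_pos (fun τ _ => hapos τ) univ_nonempty) (by positivity)
  have hk0 : (0 : ℝ) < k := by exact_mod_cast (by omega : 0 < k)
  intro D hD
  refine ⟨Real.exp (-(D * k / (δ / xiP P))), Real.exp_pos _, fun n hn m hm => ?_⟩
  have hn' : (0 : ℝ) < n := by exact_mod_cast hn
  have hlow (σ : Fin n → Ω) : δ ≤ phiFun P (empDist σ) :=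
    le_sum_mul_prod_of_mem_stdSimplex _ hτ₀ (empDist_mem_stdSimplex hn σ)
  have hup (σ : Fin n → Ω) : phiFun P (empDist σ) ≤ xiP P :=
    (hBAL.2 _ (empDist_mem_stdSimplex hn σ)).trans_eq (phiFun_uniform P)
  have hcard : (Fintype.card (Fin n → Ω) : ℝ) = (Fintype.card Ω : ℝ) ^ n := by simp
  constructor
  · have hmean : (Fintype.card Ω : ℝ) ^ n * xiP P * (1 - (k : ℝ) ^ 2 / n) ≤
        ∑ σ : Fin n → Ω, phiFun P (empDist σ) :=
      one_sub_mul_le_sum_sum_mul_prod_empDist hn _ fun τ => (hapos τ).le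
    have hε : ∑ σ : Fin n → Ω, (1 - phiFun P (empDist σ) / xiP P) ≤
        Fintype.card (Fin n → Ω) * ((k : ℝ) ^ 2 / n) := by
      rw [sum_sub_distrib, ← sum_div, sum_const, card_univ, nsmul_eq_mul, mul_one, hcard]
      have : (Fintype.card Ω : ℝ) ^ n * (1 - (k : ℝ) ^ 2 / n) ≤
          (∑ σ : Fin n → Ω, phiFun P (empDist σ)) / xiP P := by
        rw [le_div_iff₀ hξ]
        linarith
      linarith
    have hjensen := card_mul_exp_le_sum_pow (fun σ : Fin n → Ω => phiFun P (empDist σ) / xiP P)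
      (div_pos hδ hξ) (fun σ => by gcongr; exact hlow σ)
      (fun σ => (div_le_one hξ).2 (hup σ)) hε m
    simp only [div_pow] at hjensen
    rw [← sum_div, le_div_iff₀ (by positivity), hcard] at hjensen
    refine le_trans ?_ hjensen
    rw [mul_comm (Real.exp _)]
    have hmk : (m : ℝ) * ((k : ℝ) ^ 2 / n) ≤ D * k := by
      calc (m : ℝ) * ((k : ℝ) ^ 2 / n) ≤ D * n / k * ((k : ℝ) ^ 2 / n) := by gcongr
        _ = D * k := by field_simp
    gcongr
  · calc ∑ σ : Fin n → Ω, phiFun P (empDist σ) ^ m ≤ ∑ _σ : Fin n → Ω, xiP P ^ m := by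
          gcongr with σ
          · exact hδ.le.trans (hlow σ)
          · exact hup σ
      _ = (Fintype.card Ω : ℝ) ^ n * xiP P ^ m := by
          rw [sum_const, card_univ, nsmul_eq_mul, hcard]
end

section
/- For all c_1, c_2 ∈ Ω and all ε ∈ ℝ: (1/q)·Σ_{ω∈Ω} (π_{ε,ω}(c_1) − 1/q) = 0, and (1/q)·Σ_{ω∈Ω} (π_{ε,ω}(c_1) − 1/q)·(π_{ε,ω}(c_2) − 1/q) = (ε²/q)·⟨Σ, e_{c_1}⊗e_{c_2}⟩. (In other words, a random vector drawn uniformly from {π_{ε,ω} : ω ∈ Ω} has mean equal to the uniform distribution and covariance matrix (ε²/q)·Σ.) -/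
open Matrix Finset

/-- The perturbed distribution `π_{ε,ω}(σ) = 1/q + ε·⟨η, e_ω⊗e_σ⟩` with
`η = Σ_i √λ̄_i · u_i ⊗ u_i`. -/
noncomputable def piePert {Ω : Type*} [Fintype Ω] {m : ℕ}
    (u : Fin m → Ω → ℝ) (lbar : Fin m → ℝ) (ε : ℝ) (ω : Ω) : Ω → ℝ :=
  fun σ => (Fintype.card Ω : ℝ)⁻¹ + ε * ∑ i, Real.sqrt (lbar i) * u i ω * u i σ

/-- The matrix entries of `∑ i, s i • u i ⊗ u i` sum to zero along each column when every `u i` is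
orthogonal to the all-ones vector. -/
theorem sum_sum_mul_mul_eq_zero {Ω ι : Type*} [Fintype Ω] [Fintype ι] (u : ι → Ω → ℝ)
    (hperp : ∀ i, ∑ ω, u i ω = 0) (s : ι → ℝ) (c : Ω) :
    ∑ ω, ∑ i, s i * u i ω * u i c = 0 := by
  rw [Finset.sum_comm]
  refine Finset.sum_eq_zero fun i _ => ?_
  rw [← Finset.sum_mul, ← Finset.mul_sum, hperp, mul_zero, zero_mul]

/-- For orthonormal `u`, the square of `∑ i, s i • u i ⊗ u i` is `∑ i, s i ^ 2 • u i ⊗ u i`. -/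
theorem sum_mul_sum_of_orthonormal {Ω ι : Type*} [Fintype Ω] [Fintype ι] [DecidableEq ι]
    (u : ι → Ω → ℝ) (hortho : ∀ i j, (u i ⬝ᵥ u j) = if i = j then 1 else 0)
    (s : ι → ℝ) (c₁ c₂ : Ω) :
    ∑ ω, (∑ i, s i * u i ω * u i c₁) * (∑ j, s j * u j ω * u j c₂) =
      ∑ i, s i ^ 2 * u i c₁ * u i c₂ := by
  calc
    _ = ∑ i, ∑ j, s i * s j * u i c₁ * u j c₂ * (u i ⬝ᵥ u j) := by
      simp_rw [Finset.sum_mul_sum]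
      rw [Finset.sum_comm]
      refine Finset.sum_congr rfl fun i _ => ?_
      rw [Finset.sum_comm]
      refine Finset.sum_congr rfl fun j _ => ?_
      rw [dotProduct, Finset.mul_sum]
      exact Finset.sum_congr rfl fun ω _ => by ring
    _ = _ := by simp [hortho, sq]

/-- Claim "Fact_EtaEtaT": a random vector drawn uniformly from
`{π_{ε,ω} : ω ∈ Ω}` has mean equal to the uniform distribution, and covariance matrix
`(ε²/q)·Σ` where `Σ = Σ_i λ̄_i·u_i⊗u_i`. -/
theorem stmt7 {Ω : Type*} [Fintype Ω] [DecidableEq Ω] (hq : 2 ≤ Fintype.card Ω)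
    (u : Fin (Fintype.card Ω - 1) → Ω → ℝ)
    (hortho : ∀ i j, (u i ⬝ᵥ u j) = if i = j then 1 else 0)
    (hperp : ∀ i, ∑ ω, u i ω = 0)
    (lbar : Fin (Fintype.card Ω - 1) → ℝ) (hlbar : ∀ i, 0 ≤ lbar i) :
    ∀ (ε : ℝ) (c₁ c₂ : Ω),
      ((Fintype.card Ω : ℝ)⁻¹ *
          ∑ ω, (piePert u lbar ε ω c₁ - (Fintype.card Ω : ℝ)⁻¹) = 0) ∧
      ((Fintype.card Ω : ℝ)⁻¹ *
          ∑ ω, (piePert u lbar ε ω c₁ - (Fintype.card Ω : ℝ)⁻¹) *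
            (piePert u lbar ε ω c₂ - (Fintype.card Ω : ℝ)⁻¹) =
        ε ^ 2 / (Fintype.card Ω : ℝ) * ∑ i, lbar i * u i c₁ * u i c₂) := by
  intro ε c₁ c₂
  simp only [piePert, add_sub_cancel_left]
  refine ⟨?_, ?_⟩
  · rw [← Finset.mul_sum, sum_sum_mul_mul_eq_zero u hperp, mul_zero, mul_zero]
  · have h := sum_mul_sum_of_orthonormal u hortho (fun i => √(lbar i)) c₁ c₂
    simp only [Real.sq_sqrt (hlbar _)] at h
    simp_rw [mul_mul_mul_comm ε]
    rw [← Finset.mul_sum, h]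
    ring
end

section
/- For every integer ℓ ≥ 1, the expectation over ℓ independent P-distributed weight functions ψ_1, …, ψ_ℓ satisfies ∫⋯∫ ( Tr(Φ_{ψ_1}·Φ_{ψ_2}·⋯·Φ_{ψ_ℓ}) − 1 )² dP(ψ_1)⋯dP(ψ_ℓ) = Tr(Ξ^ℓ) − 2·Tr(Φ^ℓ) + 1. -/
open MeasureTheory Matrix Finset

/-- The entries of a product of independent copies of a random matrix `X` with integrable entries
are integrable, and their expectation is the entry of the power of the expected matrix. -/
theorem integrable_and_integral_listOfFn_prod {α n : Type*} [MeasurableSpace α] [Fintype n]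
    [DecidableEq n] (P : Measure α) [IsProbabilityMeasure P] (X : α → Matrix n n ℝ)
    (hX : ∀ a b, Integrable (fun x => X x a b) P) (ℓ : ℕ) (a b : n) :
    Integrable (fun f : Fin ℓ → α => (List.ofFn fun i => X (f i)).prod a b)
        (Measure.pi fun _ => P) ∧
      ∫ f : Fin ℓ → α, (List.ofFn fun i => X (f i)).prod a b ∂(Measure.pi fun _ => P) =
        ((Matrix.of fun c d => ∫ x, X x c d ∂P) ^ ℓ) a b := by
  induction ℓ generalizing a b with
  | zero => simp
  | succ m ih =>
    have hmp := measurePreserving_piFinSuccAbove (fun _ : Fin (m + 1) => P) 0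
    have hemb := (MeasurableEquiv.piFinSuccAbove (fun _ : Fin (m + 1) => α) 0).measurableEmbedding
    let g : α × (Fin m → α) → ℝ := fun p =>
      ∑ c, X p.1 a c * (List.ofFn fun i => X (p.2 i)).prod c b
    have hg : (fun f : Fin (m + 1) → α => (List.ofFn fun i => X (f i)).prod a b) =
        g ∘ MeasurableEquiv.piFinSuccAbove (fun _ : Fin (m + 1) => α) 0 := by
      funext f
      simp only [List.ofFn_succ, List.prod_cons, Matrix.mul_apply, Function.comp_apply, g]
      rfl
    have hterm : ∀ c, Integrable (fun p : α × (Fin m → α) =>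
        X p.1 a c * (List.ofFn fun i => X (p.2 i)).prod c b)
        (P.prod (Measure.pi fun _ => P)) := fun c => (hX a c).mul_prod (ih c b).1
    constructor
    · rw [hg, hmp.integrable_comp_emb hemb]
      exact integrable_finsetSum _ fun c _ => hterm c
    · rw [hg]
      refine (hmp.integral_comp hemb g).trans ?_
      rw [integral_finsetSum _ fun c _ => hterm c, pow_succ',
        Matrix.mul_apply]
      refine Finset.sum_congr rfl fun c _ => ?_
      rw [integral_prod_mul (fun x => X x a c)
        (fun f : Fin m → α => (List.ofFn fun i => X (f i)).prod c b), (ih c b).2]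
      rfl

/-- The trace of a product of independent copies of a random matrix `X` with integrable entries
is integrable, and its expectation is the trace of the power of the expected matrix. -/
theorem integrable_and_integral_trace_listOfFn_prod {α n : Type*} [MeasurableSpace α] [Fintype n]
    [DecidableEq n] (P : Measure α) [IsProbabilityMeasure P] (X : α → Matrix n n ℝ)
    (hX : ∀ a b, Integrable (fun x => X x a b) P) (ℓ : ℕ) :
    Integrable (fun f : Fin ℓ → α => (List.ofFn fun i => X (f i)).prod.trace)
        (Measure.pi fun _ => P) ∧
      ∫ f : Fin ℓ → α, (List.ofFn fun i => X (f i)).prod.trace ∂(Measure.pi fun _ => P) =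
        ((Matrix.of fun c d => ∫ x, X x c d ∂P) ^ ℓ).trace := by
  have h := integrable_and_integral_listOfFn_prod P X hX ℓ
  simp only [Matrix.trace, Matrix.diag_apply]
  refine ⟨integrable_finsetSum _ fun a _ => (h a a).1, ?_⟩
  rw [integral_finsetSum _ fun a _ => (h a a).1]
  exact Finset.sum_congr rfl fun a _ => (h a a).2

/-- The Kronecker square is multiplicative along lists. -/
theorem listOfFn_prod_kronecker_self {n R : Type*} [Fintype n] [DecidableEq n] [CommRing R]
    {ℓ : ℕ} (A : Fin ℓ → Matrix n n R) :
    (List.ofFn fun i => kroneckerMap (· * ·) (A i) (A i)).prod =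
      kroneckerMap (· * ·) (List.ofFn A).prod (List.ofFn A).prod := by
  induction ℓ with
  | zero => simp
  | succ m ih => simp only [List.ofFn_succ, List.prod_cons, ih, ← Matrix.mul_kronecker_mul]

/-- The entries of `Φ_ψ` are square integrable when the weights lie in `(0,2)` almost surely. -/
theorem memLp_two_PhiMat {Ω : Type*} [Fintype Ω] [DecidableEq Ω] {k : ℕ} [NeZero k]
    (P : Measure (WF Ω k)) [IsProbabilityMeasure P]
    (hP : ∀ᵐ ψ ∂P, ∀ τ, ψ τ ∈ Set.Ioo (0 : ℝ) 2) (ξ : ℝ) (a b : Ω) :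
    MemLp (fun ψ => PhiMat ξ ψ a b) 2 P := by
  have hsum : MemLp (fun ψ : WF Ω k => ∑ τ, if τ 0 = a ∧ τ 1 = b then ψ τ else 0) 2 P := by
    refine memLp_finsetSum _ fun τ _ => ?_
    split_ifs
    · refine MemLp.of_bound (measurable_pi_apply τ).aestronglyMeasurable 2 ?_
      filter_upwards [hP] with ψ hψ
      rw [Real.norm_of_nonneg (hψ τ).1.le]
      exact (hψ τ).2.le
    · exact MemLp.zero
  exact hsum.const_mul _

/-- trace identity in Lemma "prop:Bound4DeltaYSq": for independent
`P`-distributed weight functions `ψ_1,…,ψ_ℓ`,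
`E[(Tr(Φ_{ψ_1}⋯Φ_{ψ_ℓ}) - 1)²] = Tr(Ξ^ℓ) - 2·Tr(Φ^ℓ) + 1`. -/
theorem stmt11 {Ω : Type*} [Fintype Ω] [DecidableEq Ω] [Nonempty Ω]
    {k : ℕ} [NeZero k] (hk : 2 ≤ k)
    (Ψ : Set (WF Ω k)) (P : Measure (WF Ω k)) [IsProbabilityMeasure P]
    (hΨval : ∀ ψ ∈ Ψ, ∀ τ, ψ τ ∈ Set.Ioo (0 : ℝ) 2)
    (hPΨ : ∀ᵐ ψ ∂P, ψ ∈ Ψ) :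
    ∀ ℓ : ℕ, 1 ≤ ℓ →
      (∫ f : Fin ℓ → WF Ω k,
          (Matrix.trace (List.ofFn fun i => PhiMat (xiP P) (f i)).prod - 1) ^ 2
          ∂(Measure.pi fun _ : Fin ℓ => P)) =
        Matrix.trace (XiMat (xiP P) P ^ ℓ) - 2 * Matrix.trace (PhiAvg (xiP P) P ^ ℓ) + 1 := by
  intro ℓ _
  have hL := memLp_two_PhiMat P (hPΨ.mono hΨval) (xiP P)
  obtain ⟨hi₁, he₁⟩ := integrable_and_integral_trace_listOfFn_prod P (PhiMat (xiP P))
    (fun a b => (hL a b).integrable (by norm_num)) ℓ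
  obtain ⟨hi₂, he₂⟩ := integrable_and_integral_trace_listOfFn_prod P
    (fun ψ => kroneckerMap (· * ·) (PhiMat (xiP P) ψ) (PhiMat (xiP P) ψ))
    (fun p r => (hL p.1 r.1).integrable_mul (hL p.2 r.2)) ℓ
  simp only [listOfFn_prod_kronecker_self, Matrix.trace_kronecker] at hi₂ he₂
  have hsq : ∀ t : ℝ, (t - 1) ^ 2 = t * t - 2 * t + 1 := fun t => by ring
  simp only [hsq]
  rw [integral_add (by exact hi₂.sub (hi₁.const_mul 2)) (integrable_const _),
    integral_sub hi₂ (hi₁.const_mul 2), integral_const_mul, he₁, he₂]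
  simp only [integral_const, probReal_univ, one_smul]
  rfl
end

section
/- Assume condition SYM holds. Then for every integer ℓ ≥ 1 and all weight functions ψ_1, …, ψ_ℓ ∈ Ψ: Tr(Φ_{ψ_1}·Φ_{ψ_2}·⋯·Φ_{ψ_ℓ}) ≥ q^{1−k}·ξ^{−1}·max_{1≤j≤ℓ} min_{τ∈Ω^k} ψ_j(τ). -/
open MeasureTheory Matrix Finset

/-- Multiplying by a row-stochastic matrix turns an entrywise lower bound into a trace bound. -/
theorem le_trace_mul_of_mem_rowStochastic {n : Type*} [Fintype n] [DecidableEq n] [Nonempty n]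
    {B D : Matrix n n ℝ} {a : ℝ} (ha : 0 ≤ a) (hB : ∀ i j, a ≤ B i j)
    (hD : D ∈ rowStochastic ℝ n) : a ≤ (B * D).trace := by
  have hrow : ∀ j, ∑ i, D j i = 1 := fun j => sum_row_of_mem_rowStochastic hD j
  calc a ≤ Fintype.card n * a :=
        le_mul_of_one_le_left ha (by exact_mod_cast Fintype.card_pos)
    _ = ∑ j, ∑ i, a * D j i := by simp [← Finset.mul_sum, hrow]
    _ ≤ ∑ j, ∑ i, B i j * D j i := by
        gcongr with j _ i _
        · exact nonneg_of_mem_rowStochastic hD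
        · exact hB i j
    _ = (B * D).trace := by
        rw [Finset.sum_comm]
        simp [Matrix.trace, Matrix.mul_apply]

/-- A product of row-stochastic matrices, one of whose factors has all entries at least `a`,
has trace at least `a`. -/
theorem le_trace_list_prod_of_mem_rowStochastic {n : Type*} [Fintype n] [DecidableEq n]
    [Nonempty n] {L : List (Matrix n n ℝ)} (hL : ∀ M ∈ L, M ∈ rowStochastic ℝ n)
    {B : Matrix n n ℝ} (hBL : B ∈ L) {a : ℝ} (ha : 0 ≤ a) (hB : ∀ i j, a ≤ B i j) :
    a ≤ L.prod.trace := by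
  obtain ⟨s, t, rfl⟩ := List.append_of_mem hBL
  rw [List.prod_append, List.prod_cons, Matrix.trace_mul_comm, Matrix.mul_assoc]
  refine le_trace_mul_of_mem_rowStochastic ha hB (mul_mem ?_ ?_) <;>
    refine list_prod_mem fun M hM => hL M ?_ <;> simp [hM]

/-- Under SYM the normalising constant `q^{k-1} ξ` is positive as soon as there is a positive
weight function. -/
theorem SYMpt.normalization_pos {Ω : Type*} [Fintype Ω] [DecidableEq Ω] [Nonempty Ω] {k : ℕ}
    [NeZero k] {Ψ : Set (WF Ω k)} {ξ : ℝ} (h : SYMpt Ψ ξ) {ψ : WF Ω k} (hψ : ψ ∈ Ψ)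
    (hpos : ∀ τ, 0 < ψ τ) : 0 < (Fintype.card Ω : ℝ) ^ (k - 1) * ξ := by
  obtain ⟨ω⟩ := ‹Nonempty Ω›
  rw [← h ψ hψ 0 ω]
  refine Finset.sum_pos' (fun τ _ => ?_) ⟨fun _ => ω, Finset.mem_univ _, by simp [hpos]⟩
  split_ifs
  exacts [(hpos τ).le, le_rfl]

theorem PhiMat_mem_rowStochastic {Ω : Type*} [Fintype Ω] [DecidableEq Ω] [Nonempty Ω] {k : ℕ}
    [NeZero k] {Ψ : Set (WF Ω k)} {ξ : ℝ} (h : SYMpt Ψ ξ) {ψ : WF Ω k} (hψ : ψ ∈ Ψ)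
    (hpos : ∀ τ, 0 < ψ τ) : PhiMat ξ ψ ∈ rowStochastic ℝ Ω := by
  have hc := h.normalization_pos hψ hpos
  refine mem_rowStochastic_iff_sum.2 ⟨fun ω ω' => ?_, fun ω => ?_⟩
  · refine mul_nonneg (inv_nonneg.2 hc.le) (Finset.sum_nonneg fun τ _ => ?_)
    split_ifs
    exacts [(hpos τ).le, le_rfl]
  · simp only [PhiMat]
    rw [← Finset.mul_sum, Finset.sum_comm, inv_mul_eq_one₀ hc.ne', ← h ψ hψ 0 ω]
    refine Finset.sum_congr rfl fun τ _ => ?_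
    by_cases hτ : τ 0 = ω <;> simp [hτ]

/-- Every entry of `Φ_ψ` dominates the normalised minimum of `ψ`. -/
theorem le_PhiMat_apply {Ω : Type*} [Fintype Ω] [DecidableEq Ω] [Nonempty Ω] {k : ℕ} [NeZero k]
    (hk : 2 ≤ k) {ξ : ℝ} (hc : 0 ≤ (Fintype.card Ω : ℝ) ^ (k - 1) * ξ) {ψ : WF Ω k}
    (hpos : ∀ τ, 0 < ψ τ) (ω ω' : Ω) :
    ((Fintype.card Ω : ℝ) ^ (k - 1) * ξ)⁻¹ *
      Finset.univ.inf' Finset.univ_nonempty (fun τ : Fin k → Ω => ψ τ) ≤ PhiMat ξ ψ ω ω' := by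
  refine mul_le_mul_of_nonneg_left ?_ (inv_nonneg.2 hc)
  have h10 : (1 : Fin k) ≠ 0 := by
    obtain ⟨m, rfl⟩ := Nat.exists_eq_add_of_le' hk
    simp
  let σ : Fin k → Ω := fun i => if i = 0 then ω else ω'
  calc Finset.univ.inf' Finset.univ_nonempty (fun τ : Fin k → Ω => ψ τ) ≤ ψ σ :=
        Finset.inf'_le _ (Finset.mem_univ σ)
    _ = if σ 0 = ω ∧ σ 1 = ω' then ψ σ else 0 := by simp [σ, h10]
    _ ≤ _ := Finset.single_le_sum (f := fun τ : Fin k → Ω =>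
          if τ 0 = ω ∧ τ 1 = ω' then ψ τ else 0) (fun τ _ => by
            split_ifs
            exacts [(hpos τ).le, le_rfl]) (Finset.mem_univ σ)

/-- trace lower bound, eq. "eq_cyclic_permutations": under SYM, for any
weight functions `ψ_1,…,ψ_ℓ ∈ Ψ`,
`Tr(Φ_{ψ_1}⋯Φ_{ψ_ℓ}) ≥ q^{1-k}·ξ^{-1}·max_j min_τ ψ_j(τ)`. -/
theorem stmt13 {Ω : Type*} [Fintype Ω] [DecidableEq Ω] [Nonempty Ω]
    {k : ℕ} [NeZero k] (hk : 2 ≤ k)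
    (Ψ : Set (WF Ω k)) (P : Measure (WF Ω k)) [IsProbabilityMeasure P]
    (hΨval : ∀ ψ ∈ Ψ, ∀ τ, ψ τ ∈ Set.Ioo (0 : ℝ) 2)
    (hPΨ : ∀ᵐ ψ ∂P, ψ ∈ Ψ)
    (hSYM : SYMpt Ψ (xiP P) ∧ SYMperm P)
    {ℓ : ℕ} (hℓ : 1 ≤ ℓ) (ψs : Fin ℓ → WF Ω k) (hψs : ∀ j, ψs j ∈ Ψ) :
    ((Fintype.card Ω : ℝ) ^ (k - 1) * xiP P)⁻¹ *
        Finset.univ.sup' ⟨⟨0, hℓ⟩, Finset.mem_univ _⟩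
          (fun j : Fin ℓ => Finset.univ.inf' Finset.univ_nonempty
            (fun τ : Fin k → Ω => ψs j τ)) ≤
      Matrix.trace (List.ofFn fun i => PhiMat (xiP P) (ψs i)).prod := by
  have hpos : ∀ j τ, 0 < ψs j τ := fun j τ => (hΨval _ (hψs j) τ).1
  obtain ⟨j, -, hj⟩ := Finset.exists_mem_eq_sup' (s := Finset.univ) ⟨⟨0, hℓ⟩, Finset.mem_univ _⟩
    (fun j : Fin ℓ => Finset.univ.inf' Finset.univ_nonempty (fun τ : Fin k → Ω => ψs j τ))
  rw [hj]
  have hc := hSYM.1.normalization_pos (hψs j) (hpos j)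
  refine le_trace_list_prod_of_mem_rowStochastic (B := PhiMat (xiP P) (ψs j)) (fun M hM => ?_)
    (List.mem_ofFn.2 ⟨j, rfl⟩) (mul_nonneg (inv_nonneg.2 hc.le) ?_)
    (le_PhiMat_apply hk hc.le (hpos j))
  · obtain ⟨i, rfl⟩ := List.mem_ofFn.1 hM
    exact PhiMat_mem_rowStochastic hSYM.1 (hψs i) (hpos i)
  · exact Finset.le_inf' _ _ fun τ _ => (hpos j τ).le
end

section
/- For every ρ ∈ R(Ω): Σ_{σ_1,σ_2,τ_1,τ_2 ∈ Ω} ψ_{q,β}(σ_1,σ_2)·ψ_{q,β}(τ_1,τ_2)·ρ(σ_1,τ_1)·ρ(σ_2,τ_2) = 1 − 2(1−e^{−β})/q + (1−e^{−β})²·Σ_{σ,τ∈Ω} ρ(σ,τ)². Consequently, as a function of ρ ∈ R(Ω), this expression has the uniform distribution ρ̄ on Ω×Ω as its unique global minimizer; that is, the Potts antiferromagnet satisfies condition MIN for all q ≥ 2 and β > 0. -/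
open Finset

/-- The Potts weight function `ψ_{q,β}(σ,τ) = exp(-β·1{σ=τ})`. -/
noncomputable def pottsPsi (q : ℕ) (β : ℝ) : Fin q → Fin q → ℝ :=
  fun σ τ => Real.exp (-(β * if σ = τ then 1 else 0))

/-- `R(Ω)`: distributions on `Ω×Ω` with both marginals uniform. -/
def RSet (q : ℕ) : Set (Fin q × Fin q → ℝ) :=
  {ρ | (∀ p, 0 ≤ ρ p) ∧ (∀ s : Fin q, ∑ t : Fin q, ρ (s, t) = (q : ℝ)⁻¹) ∧
    (∀ s : Fin q, ∑ t : Fin q, ρ (t, s) = (q : ℝ)⁻¹)}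

/-- The second-moment functional of the Potts antiferromagnet. -/
noncomputable def pottsPair (q : ℕ) (β : ℝ) (ρ : Fin q × Fin q → ℝ) : ℝ :=
  ∑ σ₁ : Fin q, ∑ σ₂ : Fin q, ∑ τ₁ : Fin q, ∑ τ₂ : Fin q,
    pottsPsi q β σ₁ σ₂ * pottsPsi q β τ₁ τ₂ * ρ (σ₁, τ₁) * ρ (σ₂, τ₂)

/-- Summing against the Potts weight subtracts a multiple of the diagonal sum. -/
theorem sum_pottsPsi_mul (q : ℕ) (β : ℝ) (f : Fin q → Fin q → ℝ) :
    ∑ s, ∑ t, pottsPsi q β s t * f s t =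
      ∑ s, ∑ t, f s t - (1 - Real.exp (-β)) * ∑ s, f s s := by
  have hψ (s t : Fin q) : pottsPsi q β s t * f s t =
      f s t - (1 - Real.exp (-β)) * if s = t then f s t else 0 := by
    by_cases h : s = t
    · simp only [pottsPsi, h, if_true, mul_one]
      ring
    · simp [pottsPsi, h]
  simp only [hψ, Finset.sum_sub_distrib, ← Finset.mul_sum, Finset.sum_ite_eq,
    Finset.mem_univ, if_true]

theorem pottsPair_eq_of_mem_RSet {q : ℕ} (hq : q ≠ 0) (β : ℝ) {ρ : Fin q × Fin q → ℝ}
    (hρ : ρ ∈ RSet q) :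
    pottsPair q β ρ =
      1 - 2 * (1 - Real.exp (-β)) / q +
        (1 - Real.exp (-β)) ^ 2 * ∑ σ : Fin q, ∑ τ : Fin q, ρ (σ, τ) ^ 2 := by
  obtain ⟨-, hrow, hcol⟩ := hρ
  have hq' : (q : ℝ) ≠ 0 := Nat.cast_ne_zero.mpr hq
  have inner_sum (s t : Fin q) :
      ∑ τ₁, ∑ τ₂, pottsPsi q β s t * pottsPsi q β τ₁ τ₂ * ρ (s, τ₁) * ρ (t, τ₂) =
        pottsPsi q β s t *
          ((q : ℝ)⁻¹ * (q : ℝ)⁻¹ - (1 - Real.exp (-β)) * ∑ τ, ρ (s, τ) * ρ (t, τ)) := by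
    have h := sum_pottsPsi_mul q β fun τ₁ τ₂ => ρ (s, τ₁) * ρ (t, τ₂)
    rw [← Finset.sum_mul_sum, hrow, hrow] at h
    rw [← h]
    simp only [Finset.mul_sum, mul_assoc]
  have overlap : ∑ s, ∑ t, ∑ τ, ρ (s, τ) * ρ (t, τ) = (q : ℝ)⁻¹ := by
    calc ∑ s, ∑ t, ∑ τ, ρ (s, τ) * ρ (t, τ)
        = ∑ s, ∑ τ, ρ (s, τ) * (q : ℝ)⁻¹ := by
          refine Finset.sum_congr rfl fun s _ => ?_
          rw [Finset.sum_comm]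
          simp only [← Finset.mul_sum, hcol]
      _ = (q : ℝ)⁻¹ := by
          simp only [← Finset.sum_mul, hrow]
          simp [hq']
  simp only [pottsPair, inner_sum]
  rw [sum_pottsPsi_mul]
  simp only [Finset.sum_sub_distrib, ← Finset.mul_sum, overlap, Finset.sum_const,
    Finset.card_univ, Fintype.card_fin, nsmul_eq_mul, ← pow_two]
  field_simp
  ring

theorem uniform_mem_RSet {q : ℕ} (hq : q ≠ 0) :
    (fun _ : Fin q × Fin q => ((q : ℝ) ^ 2)⁻¹) ∈ RSet q := by
  have hq' : (q : ℝ) ≠ 0 := Nat.cast_ne_zero.mpr hq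
  refine ⟨fun _ => by positivity, fun _ => ?_, fun _ => ?_⟩ <;>
  · simp only [Finset.sum_const, Finset.card_univ, Fintype.card_fin, nsmul_eq_mul]
    field_simp

/-- The uniform distribution is the unique element of `R(Ω)` of least Euclidean norm. -/
theorem sum_sq_uniform_lt {q : ℕ} (hq : q ≠ 0) {ρ : Fin q × Fin q → ℝ} (hρ : ρ ∈ RSet q)
    (hne : ρ ≠ fun _ => ((q : ℝ) ^ 2)⁻¹) :
    ∑ _σ : Fin q, ∑ _τ : Fin q, (((q : ℝ) ^ 2)⁻¹) ^ 2 <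
      ∑ σ : Fin q, ∑ τ : Fin q, ρ (σ, τ) ^ 2 := by
  have hq' : (q : ℝ) ≠ 0 := Nat.cast_ne_zero.mpr hq
  have hpos : 0 < ∑ σ : Fin q, ∑ τ : Fin q, (ρ (σ, τ) - ((q : ℝ) ^ 2)⁻¹) ^ 2 := by
    obtain ⟨⟨s, t⟩, hst⟩ := Function.ne_iff.mp hne
    refine Finset.sum_pos' (fun _ _ => Finset.sum_nonneg fun _ _ => sq_nonneg _)
      ⟨s, Finset.mem_univ s, ?_⟩
    exact Finset.sum_pos' (fun _ _ => sq_nonneg _)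
      ⟨t, Finset.mem_univ t, sq_pos_of_ne_zero (sub_ne_zero.mpr hst)⟩
  have expand : ∑ σ : Fin q, ∑ τ : Fin q, (ρ (σ, τ) - ((q : ℝ) ^ 2)⁻¹) ^ 2 =
      ∑ σ : Fin q, ∑ τ : Fin q, ρ (σ, τ) ^ 2 -
        ∑ _σ : Fin q, ∑ _τ : Fin q, (((q : ℝ) ^ 2)⁻¹) ^ 2 := by
    simp only [sub_sq, Finset.sum_add_distrib, Finset.sum_sub_distrib, ← Finset.sum_mul,
      ← Finset.mul_sum, hρ.2.1, Finset.sum_const, Finset.card_univ, Fintype.card_fin,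
      nsmul_eq_mul]
    field_simp
    ring
  linarith

/-- Lemma "Lemma_Potts", condition MIN for the Potts antiferromagnet:
for every `ρ ∈ R(Ω)` the pair functional equals
`1 - 2(1-e^{-β})/q + (1-e^{-β})²·Σ ρ²`, and consequently the uniform distribution `ρ̄` on
`Ω×Ω` is its unique global minimizer on `R(Ω)`. -/
theorem stmt15 (q : ℕ) (hq : 2 ≤ q) (β : ℝ) (hβ : 0 < β) :
    (∀ ρ ∈ RSet q,
      pottsPair q β ρ =
        1 - 2 * (1 - Real.exp (-β)) / q +
          (1 - Real.exp (-β)) ^ 2 * ∑ σ : Fin q, ∑ τ : Fin q, ρ (σ, τ) ^ 2) ∧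
    ((fun _ : Fin q × Fin q => ((q : ℝ) ^ 2)⁻¹) ∈ RSet q) ∧
    (∀ ρ ∈ RSet q, ρ ≠ (fun _ => ((q : ℝ) ^ 2)⁻¹) →
      pottsPair q β (fun _ => ((q : ℝ) ^ 2)⁻¹) < pottsPair q β ρ) := by
  have hq0 : q ≠ 0 := by omega
  refine ⟨fun ρ hρ => pottsPair_eq_of_mem_RSet hq0 β hρ, uniform_mem_RSet hq0,
    fun ρ hρ hne => ?_⟩
  rw [pottsPair_eq_of_mem_RSet hq0 β hρ, pottsPair_eq_of_mem_RSet hq0 β (uniform_mem_RSet hq0)]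
  have hexp : Real.exp (-β) < 1 := by simpa using hβ
  have hc : 0 < (1 - Real.exp (-β)) ^ 2 := pow_pos (by linarith) 2
  have h := mul_lt_mul_of_pos_left (sum_sq_uniform_lt hq0 hρ hne) hc
  linarith
end

section
/- For every ρ ∈ R(Ω), writing α = ρ(1,1) + ρ(−1,−1): Σ_{σ,τ ∈ Ω^k} E[ψ_{J,β}(σ)·ψ_{J,β}(τ)]·Π_{i=1}^{k} ρ(σ_i,τ_i) = 1 + E[tanh(βJ)²]·(2α−1)^k. Since k is even and E[tanh(βJ)²] > 0, this expression, as a function of ρ ∈ R(Ω), has the uniform distribution ρ̄ on Ω×Ω as its unique global minimizer; that is, the diluted k-spin model with even k satisfies condition MIN. -/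
open MeasureTheory Finset

/-- The spin value `±1` of a Boolean spin (`true ↔ +1`, `false ↔ -1`). -/
def spinVal (b : Bool) : ℝ := if b then 1 else -1

/-- The `k`-spin weight function `ψ_{J,β}(σ) = 1 + tanh(βJ)·σ_1⋯σ_k`. -/
noncomputable def kspinPsi (k : ℕ) (β J : ℝ) (σ : Fin k → Bool) : ℝ :=
  1 + Real.tanh (β * J) * ∏ i, spinVal (σ i)

/-- `R(Ω)` for `Ω = {±1}`: distributions on `Ω×Ω` with both marginals uniform. -/
def RSetBool : Set (Bool × Bool → ℝ) :=
  {ρ | (∀ p, 0 ≤ ρ p) ∧ (∀ s, ∑ t, ρ (s, t) = (2 : ℝ)⁻¹) ∧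
    (∀ s, ∑ t, ρ (t, s) = (2 : ℝ)⁻¹)}

/-- The second-moment functional of the diluted `k`-spin model. -/
noncomputable def kspinPair (k : ℕ) (β : ℝ) (ν : Measure ℝ)
    (ρ : Bool × Bool → ℝ) : ℝ :=
  ∑ σ : Fin k → Bool, ∑ τ : Fin k → Bool,
    (∫ J, kspinPsi k β J σ * kspinPsi k β J τ ∂ν) * ∏ i, ρ (σ i, τ i)

theorem integrable_tanh_mul_pow (β : ℝ) (n : ℕ) (ν : Measure ℝ) [IsFiniteMeasure ν] :
    Integrable (fun J => Real.tanh (β * J) ^ n) ν := by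
  have hcont : Continuous Real.tanh := by
    rw [show Real.tanh = fun x => Real.sinh x / Real.cosh x from
      funext Real.tanh_eq_sinh_div_cosh]
    exact Real.continuous_sinh.div Real.continuous_cosh fun x => (Real.cosh_pos x).ne'
  refine Integrable.of_bound (C := 1) (by fun_prop) (Filter.Eventually.of_forall fun J => ?_)
  rw [norm_pow, Real.norm_eq_abs]
  exact pow_le_one₀ (abs_nonneg _) (Real.abs_tanh_lt_one _).le

theorem integral_tanh_mul_eq_zero (β : ℝ) (ν : Measure ℝ)
    (hνsymm : ν.map (fun x => -x) = ν) : ∫ J, Real.tanh (β * J) ∂ν = 0 := by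
  have h : ∫ J, Real.tanh (β * J) ∂ν = ∫ J, Real.tanh (β * -J) ∂ν := by
    conv_lhs => rw [← hνsymm]
    exact integral_map_equiv (MeasurableEquiv.neg ℝ) _
  simp only [mul_neg, Real.tanh_neg, integral_neg] at h
  linarith

theorem integral_tanh_mul_sq_pos {β : ℝ} (hβ : β ≠ 0) (ν : Measure ℝ) [IsFiniteMeasure ν]
    (hν0 : 0 < ν {x : ℝ | x ≠ 0}) : 0 < ∫ J, Real.tanh (β * J) ^ 2 ∂ν := by
  rw [integral_pos_iff_support_of_nonneg (fun _ => sq_nonneg _) (integrable_tanh_mul_pow β 2 ν)]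
  refine hν0.trans_le (measure_mono fun x hx => ?_)
  have hsinh : Real.sinh (β * x) ≠ 0 := Real.sinh_ne_zero.mpr (mul_ne_zero hβ hx)
  rw [Function.mem_support, Real.tanh_eq_sinh_div_cosh]
  exact pow_ne_zero 2 (div_ne_zero hsinh (Real.cosh_pos _).ne')

theorem integral_kspinPsi_mul (k : ℕ) (β : ℝ) (ν : Measure ℝ) [IsProbabilityMeasure ν]
    (hνsymm : ν.map (fun x => -x) = ν) (σ τ : Fin k → Bool) :
    ∫ J, kspinPsi k β J σ * kspinPsi k β J τ ∂ν =
      1 + (∫ J, Real.tanh (β * J) ^ 2 ∂ν) * ∏ i, spinVal (σ i) * spinVal (τ i) := by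
  have h₁ : Integrable (fun J => Real.tanh (β * J)) ν := by
    simpa using integrable_tanh_mul_pow β 1 ν
  have h₂ := integrable_tanh_mul_pow β 2 ν
  set a := ∏ i, spinVal (σ i) with ha
  set b := ∏ i, spinVal (τ i) with hb
  have hexpand : ∀ J, kspinPsi k β J σ * kspinPsi k β J τ =
      1 + Real.tanh (β * J) * (a + b) + Real.tanh (β * J) ^ 2 * (a * b) := fun J => by
    simp only [kspinPsi, ← ha, ← hb]
    ring
  simp_rw [hexpand]
  have h₀₁ : Integrable (fun J => 1 + Real.tanh (β * J) * (a + b)) ν :=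
    (integrable_const 1).add (h₁.mul_const _)
  rw [integral_add h₀₁ (h₂.mul_const _),
    integral_add (integrable_const 1) (h₁.mul_const _), integral_mul_const, integral_mul_const,
    integral_tanh_mul_eq_zero β ν hνsymm, prod_mul_distrib]
  simp [ha, hb]

theorem sum_sum_prod_eq_pow {κ R : Type*} [Fintype κ] [CommSemiring R] (k : ℕ) (f : κ → κ → R) :
    ∑ σ : Fin k → κ, ∑ τ : Fin k → κ, ∏ i, f (σ i) (τ i) = (∑ s, ∑ t, f s t) ^ k := by
  classical
  have hpi (g : Fin k → κ → R) : ∑ τ : Fin k → κ, ∏ i, g i (τ i) = ∏ i, ∑ t, g i t := by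
    rw [← sum_prod_piFinset, Fintype.piFinset_univ]
  rw [sum_congr rfl fun σ _ => hpi fun i t => f (σ i) t, hpi fun _ s => ∑ t, f s t]
  simp

theorem kspinPair_eq (k : ℕ) (β : ℝ) (ν : Measure ℝ) [IsProbabilityMeasure ν]
    (hνsymm : ν.map (fun x => -x) = ν) {ρ : Bool × Bool → ℝ} (hρ : ρ ∈ RSetBool) :
    kspinPair k β ν ρ = 1 + (∫ J, Real.tanh (β * J) ^ 2 ∂ν) *
      (2 * (ρ (true, true) + ρ (false, false)) - 1) ^ k := by
  obtain ⟨-, hrow, -⟩ := hρ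
  have ht := hrow true
  have hf := hrow false
  simp only [Fintype.sum_bool] at ht hf
  simp_rw [kspinPair, integral_kspinPsi_mul k β ν hνsymm, add_mul, one_mul, mul_assoc,
    ← prod_mul_distrib, sum_add_distrib, ← mul_sum]
  rw [sum_sum_prod_eq_pow k fun s t => ρ (s, t),
    sum_sum_prod_eq_pow k fun s t => spinVal s * spinVal t * ρ (s, t)]
  simp only [Fintype.sum_bool, spinVal]
  rw [ht, hf]
  norm_num
  left
  congr 1
  linarith

theorem const_mem_RSetBool : (fun _ : Bool × Bool => (4 : ℝ)⁻¹) ∈ RSetBool := by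
  refine ⟨fun _ => by norm_num, fun _ => ?_, fun _ => ?_⟩ <;> norm_num

theorem eq_const_of_mem_RSetBool {ρ : Bool × Bool → ℝ} (hρ : ρ ∈ RSetBool)
    (h : 2 * (ρ (true, true) + ρ (false, false)) - 1 = 0) : ρ = fun _ => (4 : ℝ)⁻¹ := by
  obtain ⟨-, hrow, hcol⟩ := hρ
  have hr₁ := hrow true
  have hr₂ := hrow false
  have hc₁ := hcol true
  have hc₂ := hcol false
  simp only [Fintype.sum_bool] at hr₁ hr₂ hc₁ hc₂
  funext ⟨s, t⟩
  cases s <;> cases t <;> linarith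

/-- Lemma "Lemma_pSpin", condition MIN for the `k`-spin model with even
`k`: writing `α = ρ(1,1) + ρ(-1,-1)`, for every `ρ ∈ R(Ω)` the pair functional equals
`1 + E[tanh(βJ)²]·(2α-1)^k`; since `k` is even and `E[tanh(βJ)²] > 0`, the uniform
distribution `ρ̄` on `Ω×Ω` is its unique global minimizer on `R(Ω)`. -/
theorem stmt16 (k : ℕ) (hk : 2 ≤ k) (hkeven : Even k) (β : ℝ) (hβ : 0 < β)
    (ν : Measure ℝ) [IsProbabilityMeasure ν]
    (hνsymm : ν.map (fun x => -x) = ν)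
    (hν0 : 0 < ν {x : ℝ | x ≠ 0}) :
    (∀ ρ ∈ RSetBool,
      kspinPair k β ν ρ =
        1 + (∫ J, Real.tanh (β * J) ^ 2 ∂ν) *
          (2 * (ρ (true, true) + ρ (false, false)) - 1) ^ k) ∧
    (0 < ∫ J, Real.tanh (β * J) ^ 2 ∂ν) ∧
    ((fun _ : Bool × Bool => (4 : ℝ)⁻¹) ∈ RSetBool) ∧
    (∀ ρ ∈ RSetBool, ρ ≠ (fun _ => (4 : ℝ)⁻¹) →
      kspinPair k β ν (fun _ => (4 : ℝ)⁻¹) < kspinPair k β ν ρ) := by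
  have hpos := integral_tanh_mul_sq_pos hβ.ne' ν hν0
  refine ⟨fun ρ hρ => kspinPair_eq k β ν hνsymm hρ, hpos, const_mem_RSetBool, fun ρ hρ hne => ?_⟩
  have hk0 : k ≠ 0 := by omega
  have hpow := hkeven.pow_pos fun h => hne (eq_const_of_mem_RSetBool hρ h)
  rw [kspinPair_eq k β ν hνsymm const_mem_RSetBool, kspinPair_eq k β ν hνsymm hρ]
  norm_num [hk0]
  exact mul_pos hpos hpow
end

section
/- The following two inequalities hold: (i) max_{c,c'∈Ω} d_TV( μ_B(·|c), μ_B(·|c') ) ≤ 2q·Σ_{b∈B} P[Y=b]·d_TV( μ_Ω(·|b), u ); (ii) Σ_{b∈B} P[Y=b]·d_TV( μ_Ω(·|b), u ) ≤ 2·max_{c,c'∈Ω} d_TV( μ_B(·|c), μ_B(·|c') ). (In the paper, μ is the joint law, under the Gibbs measure of a factor tree with uniform root marginal, of the spin at the root and the spins on the vertices at distance 2ℓ from the root; these inequalities imply that the point-to-set correlation corr and the broadcasting distance broad of a sequence of factor trees vanish simultaneously in the limit ℓ→∞.) -/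
open Finset

/-- Two values of a finite family differ by at most twice the total deviation from any `m`. -/
theorem abs_sub_le_two_mul_sum_abs_sub {Ω : Type*} [Fintype Ω] (f : Ω → ℝ) (m : ℝ) (c c' : Ω) :
    |f c - f c'| ≤ 2 * ∑ x, |f x - m| := by
  have h : ∀ x, |f x - m| ≤ ∑ y, |f y - m| := fun x =>
    Finset.single_le_sum (f := fun y => |f y - m|) (fun _ _ => abs_nonneg _) (Finset.mem_univ x)
  have htri := abs_sub_le (f c) m (f c')
  rw [abs_sub_comm m] at htri
  linarith [h c, h c']

/-- The deviation of a value from the mean is at most the average distance to the other values. -/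
theorem card_mul_abs_sub_mean_le {Ω : Type*} [Fintype Ω] [Nonempty Ω] (f : Ω → ℝ) (c : Ω) :
    (Fintype.card Ω : ℝ) * |f c - (∑ x, f x) / (Fintype.card Ω : ℝ)| ≤ ∑ x, |f c - f x| := by
  have hq : (0 : ℝ) < Fintype.card Ω := by exact_mod_cast Fintype.card_pos
  have h : (Fintype.card Ω : ℝ) * (f c - (∑ x, f x) / (Fintype.card Ω : ℝ)) =
      ∑ x, (f c - f x) := by
    rw [Finset.sum_sub_distrib, Finset.sum_const, Finset.card_univ, nsmul_eq_mul]
    field_simp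
  calc _ = |∑ x, (f c - f x)| := by rw [← h, abs_mul, abs_of_pos hq]
    _ ≤ _ := Finset.abs_sum_le_sum_abs _ _

/-- Lemma "lemma:CorrVsBroad": let `μ` be a joint distribution on
`Ω × B` with uniform `Ω`-marginal, given by its probability mass function `p`.  Writing
`T b = P[Y=b]·d_TV(μ_Ω(·|b), u) = (1/2)·Σ_c |p(c,b) - (Σ_{c'} p(c',b))/q|` and
`d_TV(μ_B(·|c), μ_B(·|c')) = (1/2)·Σ_b |q·p(c,b) - q·p(c',b)|`, one has
(i) `max_{c,c'} d_TV(μ_B(·|c), μ_B(·|c')) ≤ 2q·Σ_b T b`, and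
(ii) `Σ_b T b ≤ 2·max_{c,c'} d_TV(μ_B(·|c), μ_B(·|c'))`. -/
theorem stmt17 {Ω B : Type*} [Fintype Ω] [Fintype B] [Nonempty Ω] [DecidableEq Ω]
    (p : Ω × B → ℝ) (hp0 : ∀ x, 0 ≤ p x) (hpsum : ∑ x : Ω × B, p x = 1)
    (hmarg : ∀ c : Ω, ∑ b : B, p (c, b) = (Fintype.card Ω : ℝ)⁻¹) :
    (∀ c c' : Ω,
      (1 / 2 : ℝ) * ∑ b : B,
          |(Fintype.card Ω : ℝ) * p (c, b) - (Fintype.card Ω : ℝ) * p (c', b)| ≤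
        2 * (Fintype.card Ω : ℝ) *
          ∑ b : B, (1 / 2 : ℝ) * ∑ c'' : Ω,
            |p (c'', b) - (∑ c''' : Ω, p (c''', b)) / (Fintype.card Ω : ℝ)|) ∧
    ((∑ b : B, (1 / 2 : ℝ) * ∑ c'' : Ω,
        |p (c'', b) - (∑ c''' : Ω, p (c''', b)) / (Fintype.card Ω : ℝ)|) ≤
      2 * Finset.univ.sup' Finset.univ_nonempty (fun cc : Ω × Ω =>
        (1 / 2 : ℝ) * ∑ b : B,
          |(Fintype.card Ω : ℝ) * p (cc.1, b) - (Fintype.card Ω : ℝ) * p (cc.2, b)|)) := by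
  have hq : (0 : ℝ) < Fintype.card Ω := by exact_mod_cast Fintype.card_pos
  have hscale : ∀ x y : ℝ, |(Fintype.card Ω : ℝ) * x - (Fintype.card Ω : ℝ) * y| =
      (Fintype.card Ω : ℝ) * |x - y| := fun x y => by
    rw [← mul_sub, abs_mul, abs_of_pos hq]
  simp only [hscale, ← Finset.mul_sum]
  set q : ℝ := (Fintype.card Ω : ℝ) with hqdef
  refine ⟨fun c c' => ?_, ?_⟩
  · have h := Finset.sum_le_sum fun b (_ : b ∈ Finset.univ) =>
      abs_sub_le_two_mul_sum_abs_sub (fun x => p (x, b)) ((∑ x, p (x, b)) / q) c c'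
    rw [← Finset.mul_sum] at h
    linarith [mul_le_mul_of_nonneg_left h hq.le]
  · set M := Finset.univ.sup' Finset.univ_nonempty (fun cc : Ω × Ω =>
      (1 / 2 : ℝ) * (q * ∑ b : B, |p (cc.1, b) - p (cc.2, b)|))
    have hle : ∀ c c' : Ω, (1 / 2 : ℝ) * (q * ∑ b : B, |p (c, b) - p (c', b)|) ≤ M :=
      fun c c' => Finset.le_sup' (fun cc : Ω × Ω =>
        (1 / 2 : ℝ) * (q * ∑ b : B, |p (cc.1, b) - p (cc.2, b)|)) (Finset.mem_univ (c, c'))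
    have hM0 : 0 ≤ M := le_trans (by positivity)
      (hle (Classical.arbitrary Ω) (Classical.arbitrary Ω))
    have hdev : ∀ c : Ω, (1 / 2 : ℝ) * (q * ∑ b : B, |p (c, b) - (∑ x, p (x, b)) / q|) ≤ M := by
      intro c
      have h := Finset.sum_le_sum fun b (_ : b ∈ Finset.univ) =>
        card_mul_abs_sub_mean_le (fun x => p (x, b)) c
      rw [← Finset.mul_sum, Finset.sum_comm] at h
      have hsum := Finset.sum_le_sum fun c' (_ : c' ∈ Finset.univ) => hle c c'
      rw [← Finset.mul_sum, ← Finset.mul_sum, Finset.sum_const, Finset.card_univ, nsmul_eq_mul,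
        ← hqdef] at hsum
      refine le_of_mul_le_mul_left ?_ hq
      linarith [mul_le_mul_of_nonneg_left h hq.le]
    have hsum := Finset.sum_le_sum fun c (_ : c ∈ Finset.univ) => hdev c
    rw [← Finset.mul_sum, ← Finset.mul_sum, Finset.sum_const, Finset.card_univ, nsmul_eq_mul,
      ← hqdef, Finset.sum_comm] at hsum
    refine le_of_mul_le_mul_left ?_ hq
    linarith [mul_nonneg hq.le hM0]
end
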